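/- arXiv:1107.0124 — 3 statements merged into one kernel-verified Lean document; each statement's English description precedes it below -/
import Mathlib

section
/- Let d ≥ 1, let I be a metric space, let S : I → Matrix d d ℂ be continuous, and let Λ ⊆ Σ_I^+ be a nonempty compact θ_+-invariant subset. Then the generalized spectral radius equals the joint spectral radius: ρ(S|Λ) = ρ̂(S|Λ). -/
open Filter Topology MeasureTheory

/-- Operator norm on `d × d` complex matrices induced by the Euclidean norm on `ℂ^d`. -/
noncomputable def opNorm {d : ℕ} (A : Matrix (Fin d) (Fin d) ℂ) : ℝ :=
  ‖Matrix.toEuclideanCLM (𝕜 := ℂ) A‖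

/-- Spectral radius of a complex matrix, as a real number. -/
noncomputable def specRad {d : ℕ} (A : Matrix (Fin d) (Fin d) ℂ) : ℝ :=
  (spectralRadius ℂ A).toReal

/-- `prodS S x n = S_{i_n} ⋯ S_{i_1}` where `i_k = x (k-1)`. -/
noncomputable def prodS {d : ℕ} {I : Type*} (S : I → Matrix (Fin d) (Fin d) ℂ)
    (x : ℕ → I) : ℕ → Matrix (Fin d) (Fin d) ℂ
  | 0 => 1
  | n + 1 => S (x n) * prodS S x n

/-- `Λ` is invariant under the one-sided shift `θ₊`. -/
def ShiftInv {I : Type*} (Λ : Set (ℕ → I)) : Prop :=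
  ∀ x ∈ Λ, (fun n => x (n + 1)) ∈ Λ

/-- Joint spectral radius of `S` restricted to `Λ`. -/
noncomputable def jsr {d : ℕ} {I : Type*} (S : I → Matrix (Fin d) (Fin d) ℂ)
    (Λ : Set (ℕ → I)) : ℝ :=
  Filter.limsup (fun n : ℕ => ⨆ x : Λ, opNorm (prodS S x.1 n) ^ (1 / (n : ℝ))) Filter.atTop

/-- Generalized spectral radius of `S` restricted to `Λ`. -/
noncomputable def gsr {d : ℕ} {I : Type*} (S : I → Matrix (Fin d) (Fin d) ℂ)
    (Λ : Set (ℕ → I)) : ℝ :=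
  Filter.limsup (fun n : ℕ => ⨆ x : Λ, specRad (prodS S x.1 n) ^ (1 / (n : ℝ))) Filter.atTop


/-- `M` factors through an `r`-dimensional space. -/
def Fac {d : ℕ} (r : ℕ) (M : Matrix (Fin d) (Fin d) ℂ) : Prop :=
  ∃ P : Matrix (Fin d) (Fin r) ℂ, ∃ Q : Matrix (Fin r) (Fin d) ℂ, M = P * Q

lemma sing_fac {r : ℕ} (R : Matrix (Fin (r+1)) (Fin (r+1)) ℂ) (h : R.det = 0) :
    ∃ A : Matrix (Fin (r+1)) (Fin r) ℂ, ∃ B : Matrix (Fin r) (Fin (r+1)) ℂ, R = A * B := by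
  obtain ⟨v, hv, hvR⟩ := Matrix.exists_vecMul_eq_zero_iff.mpr h
  obtain ⟨k, hk⟩ := Function.ne_iff.mp hv
  simp only [Pi.zero_apply] at hk
  refine ⟨Matrix.of fun i j => if i = k then - v (k.succAbove j) / v k else
    if i = k.succAbove j then 1 else 0, R.submatrix k.succAbove id, ?_⟩
  ext i l
  have h0 := congrFun hvR l
  simp only [Matrix.vecMul, dotProduct, Pi.zero_apply] at h0
  rw [Fin.sum_univ_succAbove _ k] at h0
  rw [Matrix.mul_apply]
  rcases Fin.eq_self_or_eq_succAbove k i with rfl | ⟨j, rfl⟩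
  · simp only [Matrix.of_apply, if_true, Matrix.submatrix_apply, id]
    have : ∀ j, - v (i.succAbove j) / v i * R (i.succAbove j) l
        = (-1 / v i) * (v (i.succAbove j) * R (i.succAbove j) l) := fun j => by ring
    simp only [this]
    rw [← Finset.mul_sum, eq_neg_of_add_eq_zero_right h0]
    field_simp
  · simp [Fin.succAbove_ne]

lemma nilp_swap {m n : ℕ} (A : Matrix (Fin m) (Fin n) ℂ) (B : Matrix (Fin n) (Fin m) ℂ)
    (h : IsNilpotent (A * B)) : IsNilpotent (B * A) := by
  obtain ⟨k, hk⟩ := h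
  refine ⟨k+1, ?_⟩
  have : ∀ k, (B * A)^(k+1) = B * (A * B)^k * A := by
    intro k
    induction k with
    | zero => simp
    | succ k ih => rw [pow_succ, ih, pow_succ]; simp only [Matrix.mul_assoc]
  rw [this, hk]; simp

lemma det_zero_of_nilp {r : ℕ} (A : Matrix (Fin (r+1)) (Fin (r+1)) ℂ) (h : IsNilpotent A) :
    A.det = 0 := by
  obtain ⟨k, hk⟩ := h
  have : A.det ^ k = 0 := by rw [← Matrix.det_pow, hk, Matrix.det_zero]
  by_contra hx
  exact pow_ne_zero k hx this

/-- The bounding lemma: a skew Bollobas type statement. -/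
lemma skew (d r : ℕ) : ∃ L : ℕ, ∀ (P : ℕ → Matrix (Fin d) (Fin r) ℂ)
    (Q : ℕ → Matrix (Fin r) (Fin d) ℂ),
    (∀ i j, i ≤ j → j ≤ L → (Q i * P j).det = 0) → ∃ i < L, (Q (i+1) * P i).det = 0 := by
  let V := MultilinearMap ℂ (fun _ : Fin r => (Fin d → ℂ)) ℂ
  refine ⟨Module.finrank ℂ V + 1, fun P Q h => ?_⟩
  by_contra! hne
  let φ : ℕ → V := fun j =>
    ((Matrix.detRowAlternating (n := Fin r) (R := ℂ)).compLinearMap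
      (P j).vecMulLinear).toMultilinearMap
  have hφ : ∀ i j, φ j (fun a => Q i a) = (Q i * P j).det := by
    intro i j
    rfl
  have hli : LinearIndependent ℂ (fun j : Fin (Module.finrank ℂ V + 1) => φ j) := by
    rw [Fintype.linearIndependent_iff]
    intro g hg
    have key : ∀ n : ℕ, ∀ hn : n < Module.finrank ℂ V + 1, g ⟨n, hn⟩ = 0 := by
      intro n
      induction n using Nat.strong_induction_on with
      | _ n ih =>
        intro hn
        have h1 := congrArg (fun ψ : V => ψ (fun a => Q (n+1) a)) hg
        simp only [sum_apply, smul_apply, hφ,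
          zero_apply, smul_eq_mul] at h1
        rw [Finset.sum_eq_single ⟨n, hn⟩] at h1
        · exact (mul_eq_zero.mp h1).resolve_right (hne n hn)
        · rintro ⟨j, hj⟩ - hjn
          simp only [ne_eq, Fin.mk.injEq] at hjn
          rcases lt_or_gt_of_ne hjn with h2 | h2
          · rw [ih j h2 hj, zero_mul]
          · rw [h (n+1) j h2 (by omega), mul_zero]
        · simp
    exact fun i => key i i.2
  have := hli.fintype_card_le_finrank
  simp at this

structure NilCocycle {d : ℕ} (T : ℕ → ℕ → Matrix (Fin d) (Fin d) ℂ) : Prop where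
  comp : ∀ a b c, a ≤ b → b ≤ c → T a c = T b c * T a b
  nil : ∀ a b, a < b → IsNilpotent (T a b)

lemma jacob_step (d r : ℕ)
    (h : ∃ K : ℕ, 0 < K ∧ ∀ T : ℕ → ℕ → Matrix (Fin d) (Fin d) ℂ, NilCocycle T →
      Fac (r+1) (T 0 K)) :
    ∃ K : ℕ, 0 < K ∧ ∀ T : ℕ → ℕ → Matrix (Fin d) (Fin d) ℂ, NilCocycle T → Fac r (T 0 K) := by
  obtain ⟨K, hK, h⟩ := h
  obtain ⟨L, hL⟩ := skew d (r+1)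
  refine ⟨(L+1)*K, by positivity, fun T hT => ?_⟩
  have hfac : ∀ i, Fac (r+1) (T (i*K) ((i+1)*K)) := by
    intro i
    have := h (fun a b => T (i*K+a) (i*K+b)) ⟨fun a b c h1 h2 => hT.comp _ _ _ (by omega) (by omega),
      fun a b h1 => hT.nil _ _ (by omega)⟩
    simpa [add_mul] using this
  choose P Q hPQ using hfac
  by_contra hcon
  have hdet : ∀ i < L, (Q (i+1) * P i).det ≠ 0 := by
    intro i hi h0
    obtain ⟨A, B, hAB⟩ := sing_fac _ h0
    apply hcon
    have e1 : T 0 ((L+1)*K) = T ((i+2)*K) ((L+1)*K) * T 0 ((i+2)*K) :=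
      hT.comp _ _ _ (by positivity) (Nat.mul_le_mul_right _ (by omega))
    have e2 : T 0 ((i+2)*K) = T ((i+1)*K) ((i+1+1)*K) * T 0 ((i+1)*K) :=
      hT.comp _ _ _ (by positivity) (Nat.mul_le_mul_right _ (by omega))
    have e3 : T 0 ((i+1)*K) = T (i*K) ((i+1)*K) * T 0 (i*K) :=
      hT.comp _ _ _ (by positivity) (Nat.mul_le_mul_right _ (by omega))
    refine ⟨T ((i+2)*K) ((L+1)*K) * P (i+1) * A, B * Q i * T 0 (i*K), ?_⟩
    rw [e1, e2, e3, hPQ, hPQ]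
    calc _ = T ((i+2)*K) ((L+1)*K) * P (i+1) * (Q (i+1) * P i) * Q i * T 0 (i*K) := by
          simp only [Matrix.mul_assoc]
      _ = _ := by rw [hAB]; simp only [Matrix.mul_assoc]
  have hR : ∀ i k, i + k ≤ L → ∃ R : Matrix (Fin (r+1)) (Fin (r+1)) ℂ, R.det ≠ 0 ∧
      T (i*K) ((i+k+1)*K) = P (i+k) * R * Q i := by
    intro i k
    induction k with
    | zero => intro _; exact ⟨1, by simp, by simp [hPQ]⟩
    | succ k ih =>
      intro hk
      obtain ⟨R, hR, e⟩ := ih (by omega)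
      refine ⟨Q (i+k+1) * P (i+k) * R, ?_, ?_⟩
      · rw [Matrix.det_mul]
        exact mul_ne_zero (hdet _ (by omega)) hR
      · have : T (i*K) ((i+(k+1)+1)*K) = T ((i+k+1)*K) ((i+k+1+1)*K) * T (i*K) ((i+k+1)*K) :=
          hT.comp _ _ _ (Nat.mul_le_mul_right _ (by omega)) (Nat.mul_le_mul_right _ (by omega))
        rw [this, e, hPQ]
        simp only [Matrix.mul_assoc, add_assoc]
  obtain ⟨i, hi, h0⟩ := hL P Q (by
    intro i j hij hj
    obtain ⟨k, rfl⟩ := Nat.exists_eq_add_of_le hij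
    obtain ⟨R, hR, e⟩ := hR i k hj
    have hn := hT.nil (i*K) ((i+k+1)*K) (Nat.mul_lt_mul_of_pos_right (by omega) hK)
    rw [e, Matrix.mul_assoc] at hn
    have := det_zero_of_nilp _ (nilp_swap _ _ hn)
    rw [Matrix.mul_assoc, Matrix.det_mul] at this
    exact (mul_eq_zero.mp this).resolve_left hR)
  exact hdet i hi h0

lemma jacob (d : ℕ) : ∃ K : ℕ, 0 < K ∧ ∀ T : ℕ → ℕ → Matrix (Fin d) (Fin d) ℂ,
    NilCocycle T → T 0 K = 0 := by
  have : ∀ n, (∃ K : ℕ, 0 < K ∧ ∀ T : ℕ → ℕ → Matrix (Fin d) (Fin d) ℂ, NilCocycle T →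
      Fac n (T 0 K)) → (∃ K : ℕ, 0 < K ∧ ∀ T : ℕ → ℕ → Matrix (Fin d) (Fin d) ℂ, NilCocycle T →
      Fac 0 (T 0 K)) := by
    intro n
    induction n with
    | zero => exact id
    | succ n ih => exact fun h => ih (jacob_step d n h)
  obtain ⟨K, hK, h⟩ := this d ⟨1, one_pos, fun T _ => ⟨T 0 1, 1, by simp⟩⟩
  refine ⟨K, hK, fun T hT => ?_⟩
  obtain ⟨P, Q, e⟩ := h T hT
  rw [e]; ext i j; simp [Matrix.mul_apply]

/-- Product of `n` consecutive matrices starting from index `a`. -/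
def seg {R : Type*} [CommRing R] {d : ℕ} (M : ℕ → Matrix (Fin d) (Fin d) R) (a : ℕ) :
    ℕ → Matrix (Fin d) (Fin d) R
  | 0 => 1
  | n + 1 => M (a + n) * seg M a n

lemma seg_add {R : Type*} [CommRing R] {d : ℕ} (M : ℕ → Matrix (Fin d) (Fin d) R) (a m n : ℕ) :
    seg M a (m + n) = seg M (a + m) n * seg M a m := by
  induction n with
  | zero => simp [seg]
  | succ n ih => rw [← add_assoc, seg, ih, seg, Matrix.mul_assoc, add_assoc]

lemma seg_congr {R : Type*} [CommRing R] {d : ℕ} (M N : ℕ → Matrix (Fin d) (Fin d) R) (a n : ℕ)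
    (h : ∀ i < a + n, M i = N i) : seg M a n = seg N a n := by
  induction n with
  | zero => rfl
  | succ n ih => rw [seg, seg, ih (fun i hi => h i (by omega)), h _ (by omega)]

lemma seg_map {R R' : Type*} [CommRing R] [CommRing R'] {d : ℕ} (f : R →+* R')
    (M : ℕ → Matrix (Fin d) (Fin d) R) (a n : ℕ) :
    seg (fun i => (M i).map f) a n = (seg M a n).map f := by
  induction n with
  | zero => simp [seg]
  | succ n ih => rw [seg, seg, ih, Matrix.map_mul]

lemma nilp_of_coeff {d : ℕ} (A : Matrix (Fin d) (Fin d) ℂ)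
    (h : ∀ l : Fin d, A.charpoly.coeff l = 0) : IsNilpotent A := by
  have : A.charpoly = Polynomial.X ^ d := by
    have hd : A.charpoly.natDegree = d := by
      simpa using A.charpoly_natDegree_eq_dim
    ext l
    rw [Polynomial.coeff_X_pow]
    rcases lt_trichotomy l d with hl | hl | hl
    · rw [if_neg hl.ne]; exact h ⟨l, hl⟩
    · rw [if_pos hl, hl]
      have := A.charpoly_monic.coeff_natDegree
      rwa [hd] at this
    · rw [if_neg hl.ne']
      exact Polynomial.coeff_eq_zero_of_natDegree_lt (by omega)
  refine ⟨d, ?_⟩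
  have h2 := Matrix.aeval_self_charpoly A
  rw [this] at h2
  simpa using h2

lemma coeff_bound {d : ℕ} (A : Matrix (Fin d) (Fin d) ℂ) (δ : ℝ) (h0 : 0 ≤ δ) (h1 : δ ≤ 1)
    (h : ∀ μ ∈ spectrum ℂ A, ‖μ‖ ≤ δ) (l : Fin d) :
    ‖A.charpoly.coeff l‖ ≤ 2 ^ d * δ := by
  have hd : A.charpoly.natDegree = d := by
    simpa using A.charpoly_natDegree_eq_dim
  have := Polynomial.coeff_le_of_roots_le (p := A.charpoly) (f := RingHom.id ℂ) (B := δ) l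
    A.charpoly_monic (IsAlgClosed.splits _) (by
      intro z hz
      rw [Polynomial.map_id] at hz
      exact h z (Matrix.mem_spectrum_iff_isRoot_charpoly.mpr (Polynomial.isRoot_of_mem_roots hz)))
  rw [Polynomial.map_id, hd] at this
  refine this.trans ?_
  rw [mul_comm]
  have e1 : δ ^ (d - (l:ℕ)) ≤ δ := by
    have := pow_le_pow_of_le_one h0 h1 (show 1 ≤ d - (l:ℕ) by have := l.2; omega)
    simpa using this
  have e2 : ((d.choose l : ℕ) : ℝ) ≤ 2 ^ d := by
    exact_mod_cast Nat.choose_le_two_pow d l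
  gcongr

lemma quant (d : ℕ) : ∃ K : ℕ, 0 < K ∧ ∃ k : ℕ, ∃ C : ℝ, 0 ≤ C ∧
    ∀ M : ℕ → Matrix (Fin d) (Fin d) ℂ, (∀ i p q, ‖M i p q‖ ≤ 1) → ∀ δ : ℝ, 0 ≤ δ → δ ≤ 1 →
    (∀ a n, 0 < n → a + n ≤ K → ∀ μ ∈ spectrum ℂ (seg M a n), ‖μ‖ ≤ δ) →
    ∀ p q, ‖seg M 0 K p q‖ ^ k ≤ C * δ := by
  obtain ⟨K, hK, hJ⟩ := jacob d
  let σ := Fin K × Fin d × Fin d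
  let G : ℕ → Matrix (Fin d) (Fin d) (MvPolynomial σ ℂ) := fun i =>
    if h : i < K then Matrix.of (fun p q => MvPolynomial.X (⟨i, h⟩, p, q)) else 0
  let ι := Fin (K+1) × Fin (K+1) × Fin d
  let f : ι → MvPolynomial σ ℂ := fun t =>
    if 0 < (t.2.1 : ℕ) ∧ (t.1 : ℕ) + t.2.1 ≤ K then (seg G t.1 t.2.1).charpoly.coeff t.2.2 else 0
  let J := Ideal.span (Set.range f)
  have hrad : ∀ p q, seg G 0 K p q ∈ J.radical := by
    intro p q
    rw [← MvPolynomial.vanishingIdeal_zeroLocus_eq_radical (K := ℂ),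
      MvPolynomial.mem_vanishingIdeal_iff]
    intro x hx
    rw [MvPolynomial.mem_zeroLocus_iff] at hx
    let ev : MvPolynomial σ ℂ →+* ℂ := (MvPolynomial.aeval x : MvPolynomial σ ℂ →ₐ[ℂ] ℂ).toRingHom
    let N : ℕ → Matrix (Fin d) (Fin d) ℂ := fun i => (G i).map ev
    have hN : ∀ i, K ≤ i → N i = 0 := by
      intro i hi
      simp [N, G, not_lt.mpr hi]
    have hT : NilCocycle (fun a b => seg N a (b - a)) := by
      refine ⟨fun a b c h1 h2 => ?_, fun a b h1 => ?_⟩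
      · have := seg_add N a (b - a) (c - b)
        rwa [show b - a + (c - b) = c - a by omega, show a + (b - a) = b by omega] at this
      · rcases le_or_gt b K with hb | hb
        · apply nilp_of_coeff
          intro l
          have := hx (f (⟨a, by omega⟩, ⟨b - a, by omega⟩, l)) (Ideal.subset_span ⟨_, rfl⟩)
          simp only [f] at this
          rw [if_pos (by omega)] at this
          have e : seg N a (b - a) = (seg G a (b - a)).map ev := seg_map ev G a (b - a)
          simp only [e]
          rw [Matrix.charpoly_map, Polynomial.coeff_map]
          exact this
        · obtain ⟨n, hn⟩ : ∃ n, b - a = n + 1 := ⟨b - a - 1, by omega⟩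
          simp only [hn]
          rw [seg, hN _ (by omega), Matrix.zero_mul]
          exact IsNilpotent.zero
    have h0 := hJ _ hT
    simp only [Nat.sub_zero] at h0
    have e : seg N 0 K = (seg G 0 K).map ev := seg_map ev G 0 K
    rw [e] at h0
    exact congrFun (congrFun h0 p) q
  obtain ⟨k, hk⟩ := J.exists_radical_pow_le_of_fg (IsNoetherian.noetherian _)
  have hmem : ∀ p q, (seg G 0 K p q) ^ k ∈ J := fun p q => hk (Ideal.pow_mem_pow (hrad p q) k)
  have hex : ∀ p q, ∃ c : ι → MvPolynomial σ ℂ, ∑ i, c i * f i = (seg G 0 K p q) ^ k :=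
    fun p q => Ideal.mem_span_range_iff_exists_fun.mp (hmem p q)
  choose c hc using hex
  have hbd : ∀ p q i, ∃ B : ℝ, 0 ≤ B ∧ ∀ x : σ → ℂ, ‖x‖ ≤ 1 → ‖MvPolynomial.eval x (c p q i)‖ ≤ B := by
    intro p q i
    obtain ⟨B, hB⟩ := (isCompact_closedBall (0 : σ → ℂ) 1).exists_bound_of_continuousOn
      (f := fun x => MvPolynomial.eval x (c p q i)) (MvPolynomial.continuous_eval _).continuousOn
    exact ⟨max B 0, le_max_right _ _, fun x hx => (hB x (by simpa using hx)).trans (le_max_left _ _)⟩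
  choose B hB0 hB using hbd
  refine ⟨K, hK, k, ∑ p, ∑ q, ∑ i, B p q i * 2 ^ d, ?_, ?_⟩
  · exact Finset.sum_nonneg fun p _ => Finset.sum_nonneg fun q _ => Finset.sum_nonneg fun i _ =>
      mul_nonneg (hB0 p q i) (by positivity)
  intro M hM δ h0 h1 hspec p q
  let x : σ → ℂ := fun s => M s.1 s.2.1 s.2.2
  have hx : ‖x‖ ≤ 1 := (pi_norm_le_iff_of_nonneg zero_le_one).mpr fun s => hM _ _ _
  have hseg : ∀ a n, a + n ≤ K → (seg G a n).map (MvPolynomial.eval x) = seg M a n := by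
    intro a n han
    rw [← seg_map]
    apply seg_congr
    intro i hi
    have : i < K := by omega
    ext u v
    simp [G, this, x]
  have hf : ∀ i, ‖MvPolynomial.eval x (f i)‖ ≤ 2 ^ d * δ := by
    rintro ⟨a, n, l⟩
    simp only [f]
    split_ifs with hif
    · rw [← Polynomial.coeff_map, ← Matrix.charpoly_map, hseg _ _ hif.2]
      exact coeff_bound _ δ h0 h1 (hspec _ _ hif.1 hif.2) l
    · simp only [map_zero, norm_zero]; positivity
  have e := congrArg (MvPolynomial.eval x) (hc p q)
  have e' : MvPolynomial.eval x (seg G 0 K p q) = seg M 0 K p q :=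
    congrFun (congrFun (hseg 0 K (by omega)) p) q
  rw [map_pow, e', map_sum] at e
  rw [← norm_pow, ← e]
  calc _ ≤ ∑ i, ‖MvPolynomial.eval x (c p q i * f i)‖ := norm_sum_le _ _
    _ ≤ ∑ i, B p q i * 2 ^ d * δ := by
        apply Finset.sum_le_sum
        intro i _
        rw [map_mul, norm_mul, mul_assoc]
        exact mul_le_mul (hB p q i x hx) (hf i) (norm_nonneg _) (hB0 _ _ _)
    _ = (∑ i, B p q i * 2 ^ d) * δ := by rw [Finset.sum_mul]
    _ ≤ _ := by
        apply mul_le_mul_of_nonneg_right _ h0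
        have hn : ∀ p q, 0 ≤ ∑ i, B p q i * 2 ^ d := fun p q => Finset.sum_nonneg fun i _ =>
          mul_nonneg (hB0 p q i) (by positivity)
        refine le_trans ?_ (Finset.single_le_sum (f := fun p => ∑ q, ∑ i, B p q i * 2 ^ d)
          (fun p _ => Finset.sum_nonneg fun q _ => hn p q) (Finset.mem_univ p))
        exact Finset.single_le_sum (f := fun q => ∑ i, B p q i * 2 ^ d)
          (fun q _ => hn p q) (Finset.mem_univ q)

lemma opNorm_nonneg {d : ℕ} (A : Matrix (Fin d) (Fin d) ℂ) : 0 ≤ opNorm A := norm_nonneg _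

lemma opNorm_mul_le {d : ℕ} (A B : Matrix (Fin d) (Fin d) ℂ) :
    opNorm (A * B) ≤ opNorm A * opNorm B := by
  unfold opNorm
  rw [map_mul]
  exact norm_mul_le _ _

lemma opNorm_one_le {d : ℕ} : opNorm (1 : Matrix (Fin d) (Fin d) ℂ) ≤ 1 := by
  unfold opNorm
  rw [map_one]
  exact ContinuousLinearMap.norm_id_le

lemma opNorm_smul {d : ℕ} (z : ℂ) (A : Matrix (Fin d) (Fin d) ℂ) :
    opNorm (z • A) = ‖z‖ * opNorm A := by
  unfold opNorm
  rw [map_smul, norm_smul]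

lemma entry_le_opNorm {d : ℕ} (A : Matrix (Fin d) (Fin d) ℂ) (p q : Fin d) :
    ‖A p q‖ ≤ opNorm A := by
  have h := (Matrix.toEuclideanCLM (𝕜 := ℂ) A).le_opNorm (EuclideanSpace.single q (1:ℂ))
  have h2 := PiLp.norm_apply_le (Matrix.toEuclideanCLM (𝕜 := ℂ) A (EuclideanSpace.single q (1:ℂ))) p
  have e : (Matrix.toEuclideanCLM (𝕜 := ℂ) A (EuclideanSpace.single q (1:ℂ))) p = A p q := by
    simp [EuclideanSpace.single]
  rw [e] at h2
  simp only [PiLp.norm_single, norm_one, mul_one] at h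
  exact h2.trans h

lemma opNorm_le_entry {d : ℕ} (hd : 1 ≤ d) : ∃ D : ℝ, 0 ≤ D ∧ ∀ A : Matrix (Fin d) (Fin d) ℂ,
    ∃ p q, opNorm A ≤ D * ‖A p q‖ := by
  refine ⟨∑ p, ∑ q, opNorm (Matrix.single p q (1:ℂ) : Matrix (Fin d) (Fin d) ℂ), ?_, fun A => ?_⟩
  · exact Finset.sum_nonneg fun p _ => Finset.sum_nonneg fun q _ => opNorm_nonneg _
  have : Nonempty (Fin d) := ⟨⟨0, hd⟩⟩
  obtain ⟨⟨p, q⟩, h⟩ := Finite.exists_max (fun t : Fin d × Fin d => ‖A t.1 t.2‖)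
  refine ⟨p, q, ?_⟩
  have e : A = ∑ i, ∑ j, A i j • Matrix.single i j (1:ℂ) := by
    conv_lhs => rw [Matrix.matrix_eq_sum_single A]
    simp
  have h2 : opNorm A ≤ ∑ i, ∑ j, ‖A i j‖ * opNorm (Matrix.single i j (1:ℂ) : Matrix (Fin d) (Fin d) ℂ) := by
    conv_lhs => rw [e]
    unfold opNorm
    rw [map_sum]
    refine (norm_sum_le _ _).trans (Finset.sum_le_sum fun i _ => ?_)
    rw [map_sum]
    refine (norm_sum_le _ _).trans (Finset.sum_le_sum fun j _ => ?_)
    rw [map_smul, norm_smul]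
  refine h2.trans ?_
  simp only [Finset.sum_mul]
  refine Finset.sum_le_sum fun i _ => Finset.sum_le_sum fun j _ => ?_
  rw [mul_comm]
  exact mul_le_mul_of_nonneg_left (h (i, j)) (opNorm_nonneg _)

lemma specRad_aux {d : ℕ} (hd : 1 ≤ d) (A : Matrix (Fin d) (Fin d) ℂ) :
    spectralRadius ℂ A ≤ (‖Matrix.toEuclideanCLM (𝕜 := ℂ) A‖₊ : ENNReal) := by
  have : Nonempty (Fin d) := ⟨⟨0, hd⟩⟩
  have := spectrum.spectralRadius_le_nnnorm (𝕜 := ℂ) (Matrix.toEuclideanCLM (𝕜 := ℂ) A)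
  have e : spectralRadius ℂ (Matrix.toEuclideanCLM (𝕜 := ℂ) A) = spectralRadius ℂ A := by
    unfold spectralRadius
    rw [AlgEquiv.spectrum_eq]
  rwa [e] at this

lemma specRad_nonneg {d : ℕ} (A : Matrix (Fin d) (Fin d) ℂ) : 0 ≤ specRad A :=
  ENNReal.toReal_nonneg

lemma specRad_le {d : ℕ} (hd : 1 ≤ d) (A : Matrix (Fin d) (Fin d) ℂ) : specRad A ≤ opNorm A := by
  have := ENNReal.toReal_mono ENNReal.coe_ne_top (specRad_aux hd A)
  simpa [specRad, opNorm] using this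

lemma le_specRad {d : ℕ} (hd : 1 ≤ d) (A : Matrix (Fin d) (Fin d) ℂ) (μ : ℂ)
    (h : μ ∈ spectrum ℂ A) : ‖μ‖ ≤ specRad A := by
  have h1 : (‖μ‖₊ : ENNReal) ≤ spectralRadius ℂ A := by
    unfold spectralRadius
    exact le_iSup₂ (f := fun k (_ : k ∈ spectrum ℂ A) => (‖k‖₊ : ENNReal)) μ h
  have h2 : spectralRadius ℂ A ≠ ⊤ := ne_top_of_le_ne_top ENNReal.coe_ne_top (specRad_aux hd A)
  have := ENNReal.toReal_mono h2 h1
  simpa [specRad] using this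

open scoped Pointwise in
lemma spectrum_smul_bound {d : ℕ} (hd : 1 ≤ d) (A : Matrix (Fin d) (Fin d) ℂ) (z : ℂ) (hz : z ≠ 0)
    (μ : ℂ) (h : μ ∈ spectrum ℂ (z • A)) : ‖μ‖ ≤ ‖z‖ * specRad A := by
  have e := spectrum.unit_smul_eq_smul A (Units.mk0 z hz)
  have h' : μ ∈ (Units.mk0 z hz) • spectrum ℂ A := by
    rw [← e]; exact h
  obtain ⟨ν, hν, rfl⟩ := h'
  change ‖z * ν‖ ≤ _
  rw [norm_mul]
  exact mul_le_mul_of_nonneg_left (le_specRad hd A ν hν) (norm_nonneg _)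

lemma prodS_add {d : ℕ} {I : Type*} (S : I → Matrix (Fin d) (Fin d) ℂ) (x : ℕ → I) (m n : ℕ) :
    prodS S x (m + n) = prodS S (fun i => x (i + m)) n * prodS S x m := by
  induction n with
  | zero => simp [prodS]
  | succ n ih => rw [← add_assoc, prodS, ih, prodS, Matrix.mul_assoc, add_comm n m]

lemma shift_mem {I : Type*} {Λ : Set (ℕ → I)} (hinv : ShiftInv Λ) (x : ℕ → I) (hx : x ∈ Λ) (m : ℕ) :
    (fun i => x (i + m)) ∈ Λ := by
  induction m with
  | zero => simpa using hx
  | succ m ih =>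
    have := hinv _ ih
    simpa [add_assoc, add_comm, add_left_comm] using this

lemma growth {d : ℕ} {I : Type*} [MetricSpace I]
    (S : I → Matrix (Fin d) (Fin d) ℂ) (hS : Continuous S)
    (Λ : Set (ℕ → I)) (hcomp : IsCompact Λ) (hinv : ShiftInv Λ) :
    ∃ c : ℝ, 1 ≤ c ∧ ∀ x ∈ Λ, ∀ n, opNorm (prodS S x n) ≤ c ^ n := by
  have hc : Continuous (fun A : Matrix (Fin d) (Fin d) ℂ => Matrix.toEuclideanCLM (𝕜 := ℂ) A) :=
    LinearMap.continuous_of_finiteDimensional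
      (Matrix.toEuclideanCLM (𝕜 := ℂ) (n := Fin d)).toAlgEquiv.toLinearMap
  obtain ⟨B, hB⟩ := hcomp.exists_bound_of_continuousOn
    (f := fun x : ℕ → I => Matrix.toEuclideanCLM (𝕜 := ℂ) (S (x 0)))
    (hc.comp (hS.comp (continuous_apply 0))).continuousOn
  refine ⟨max B 1, le_max_right _ _, fun x hx n => ?_⟩
  induction n with
  | zero => simpa [prodS] using opNorm_one_le
  | succ n ih =>
    rw [prodS, pow_succ, mul_comm (max B 1 ^ n)]
    refine (opNorm_mul_le _ _).trans ?_
    have h1 : opNorm (S (x n)) ≤ max B 1 := by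
      have := hB _ (shift_mem hinv x hx n)
      simp only [zero_add] at this
      exact this.trans (le_max_left _ _)
    exact mul_le_mul h1 ih (opNorm_nonneg _) (by positivity)

section limsupstuff

variable {ι : Type*} [Nonempty ι] (F : ℕ → ι → ℝ) (c : ℝ) (hc : 1 ≤ c)
  (h0 : ∀ n x, 0 ≤ F n x) (h1 : ∀ n x, F n x ≤ c ^ n)

include hc h0 h1

lemma ls_root_le (n : ℕ) (x : ι) : F n x ^ (1 / (n:ℝ)) ≤ c := by
  rcases Nat.eq_zero_or_pos n with rfl | hn
  · simpa using hc
  · have hc0 : 0 ≤ c := by linarith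
    calc F n x ^ (1 / (n:ℝ)) ≤ (c ^ n) ^ (1 / (n:ℝ)) :=
          Real.rpow_le_rpow (h0 n x) (h1 n x) (by positivity)
      _ = c := by rw [one_div]; exact Real.pow_rpow_inv_natCast hc0 hn.ne'

lemma ls_bdd (n : ℕ) : BddAbove (Set.range fun x => F n x ^ (1 / (n:ℝ))) :=
  ⟨c, by rintro _ ⟨x, rfl⟩; exact ls_root_le F c hc h0 h1 n x⟩

lemma ls_sup_nonneg (n : ℕ) : 0 ≤ ⨆ x, F n x ^ (1 / (n:ℝ)) :=
  Real.iSup_nonneg fun x => Real.rpow_nonneg (h0 n x) _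

lemma ls_sup_le (n : ℕ) : ⨆ x, F n x ^ (1 / (n:ℝ)) ≤ c :=
  ciSup_le fun x => ls_root_le F c hc h0 h1 n x

lemma ls_isBdd : IsBoundedUnder (· ≤ ·) atTop (fun n : ℕ => ⨆ x, F n x ^ (1 / (n:ℝ))) :=
  isBoundedUnder_of ⟨c, fun n => ls_sup_le F c hc h0 h1 n⟩

lemma ls_isCobdd : IsCoboundedUnder (· ≤ ·) atTop (fun n : ℕ => ⨆ x, F n x ^ (1 / (n:ℝ))) :=
  (isBoundedUnder_of ⟨0, fun n => ls_sup_nonneg F c hc h0 h1 n⟩ :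
    IsBoundedUnder (· ≥ ·) atTop _).isCoboundedUnder_le

lemma ls_nonneg : 0 ≤ limsup (fun n : ℕ => ⨆ x, F n x ^ (1 / (n:ℝ))) atTop :=
  le_limsup_of_frequently_le
    (Frequently.of_forall fun n => ls_sup_nonneg F c hc h0 h1 n) (ls_isBdd F c hc h0 h1)

lemma ls_upper (γ : ℝ) (h : limsup (fun n : ℕ => ⨆ x, F n x ^ (1 / (n:ℝ))) atTop < γ) :
    ∀ᶠ n in atTop, ∀ x, F n x ≤ γ ^ n := by
  filter_upwards [eventually_lt_of_limsup_lt h (ls_isBdd F c hc h0 h1), eventually_gt_atTop 0]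
    with n hn hn0 x
  have h2 : F n x ^ (1 / (n:ℝ)) ≤ γ := (le_ciSup (ls_bdd F c hc h0 h1 n) x).trans hn.le
  have h3 := pow_le_pow_left₀ (Real.rpow_nonneg (h0 n x) _) h2 n
  rwa [one_div, Real.rpow_inv_natCast_pow (h0 n x) hn0.ne'] at h3

lemma ls_lower (β : ℝ) (hβ : 0 ≤ β)
    (h : β < limsup (fun n : ℕ => ⨆ x, F n x ^ (1 / (n:ℝ))) atTop) :
    ∃ᶠ n in atTop, ∃ x, β ^ n < F n x := by
  have h4 := frequently_lt_of_lt_limsup (ls_isCobdd F c hc h0 h1) h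
  refine (h4.and_eventually (eventually_gt_atTop 0)).mono ?_
  rintro n ⟨hn, hn0⟩
  obtain ⟨x, hx⟩ := exists_lt_of_lt_ciSup hn
  refine ⟨x, ?_⟩
  have h3 := pow_lt_pow_left₀ hx hβ hn0.ne'
  rwa [one_div, Real.rpow_inv_natCast_pow (h0 n x) hn0.ne'] at h3

end limsupstuff

lemma seg_prodS {d : ℕ} {I : Type*} (S : I → Matrix (Fin d) (Fin d) ℂ) (x : ℕ → I) (z : ℂ)
    (m a n : ℕ) :
    seg (fun i => z • prodS S (fun j => x (j + i * m)) m) a n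
      = z ^ n • prodS S (fun j => x (j + a * m)) (n * m) := by
  induction n with
  | zero => simp [seg, prodS]
  | succ n ih =>
    rw [seg, ih, Nat.succ_mul n m, prodS_add S _ (n * m) m, pow_succ, Matrix.smul_mul,
      Matrix.mul_smul, smul_smul, mul_comm z]
    simp only [add_mul, add_assoc, add_comm (n*m)]

/-- **Theorem A (Gel'fand-type spectral radius formula with constraints).** -/
theorem gsr_eq_jsr {d : ℕ} (hd : 1 ≤ d) {I : Type*} [MetricSpace I]
    (S : I → Matrix (Fin d) (Fin d) ℂ) (hS : Continuous S)
    (Λ : Set (ℕ → I)) (hne : Λ.Nonempty) (hcomp : IsCompact Λ) (hinv : ShiftInv Λ) :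
    gsr S Λ = jsr S Λ := by
  have hI : Nonempty Λ := hne.to_subtype
  obtain ⟨c, hc, hgr⟩ := growth S hS Λ hcomp hinv
  have n0 : ∀ n (x : Λ), 0 ≤ opNorm (prodS S x.1 n) := fun n x => opNorm_nonneg _
  have n1 : ∀ n (x : Λ), opNorm (prodS S x.1 n) ≤ c ^ n := fun n x => hgr x.1 x.2 n
  have s0 : ∀ n (x : Λ), 0 ≤ specRad (prodS S x.1 n) := fun n x => specRad_nonneg _
  have s1 : ∀ n (x : Λ), specRad (prodS S x.1 n) ≤ c ^ n :=
    fun n x => (specRad_le hd _).trans (n1 n x)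
  apply le_antisymm
  · refine limsup_le_limsup (Eventually.of_forall fun n => ?_) (ls_isCobdd _ c hc s0 s1)
      (ls_isBdd _ c hc n0 n1)
    exact ciSup_mono (ls_bdd _ c hc n0 n1 n) fun x =>
      Real.rpow_le_rpow (s0 n x) (specRad_le hd _) (by positivity)
  by_contra! hlt
  have hg0 : 0 ≤ gsr S Λ := ls_nonneg _ c hc s0 s1
  obtain ⟨K, hK, k, C, hC, hq⟩ := quant d
  obtain ⟨D, hD, hent⟩ := opNorm_le_entry hd
  set J := jsr S Λ with hJ
  set γ := (gsr S Λ + J) / 2 with hγ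
  have hJ0 : 0 < J := by linarith
  have hγ0 : 0 < γ := by linarith
  have hγJ : γ < J := by linarith
  obtain ⟨t, ht1, ht⟩ : ∃ t : ℝ, 1 < t ∧ γ / (J * t) * (t * t) ^ (K * k) < 1 := by
    have hct : ContinuousAt (fun t : ℝ => γ / (J * t) * (t * t) ^ (K * k)) 1 := by
      apply ContinuousAt.mul
      · exact ContinuousAt.div continuousAt_const (by fun_prop) (by simpa using hJ0.ne')
      · fun_prop
    have hev := hct.eventually_lt continuousAt_const
      (show γ / (J * 1) * (1 * 1) ^ (K * k) < (1:ℝ) by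
        simp only [mul_one, one_pow]; exact (div_lt_one hJ0).mpr hγJ)
    have hev2 : ∀ᶠ t in 𝓝[>] (1:ℝ), γ / (J * t) * (t * t) ^ (K * k) < 1 := nhdsWithin_le_nhds hev
    obtain ⟨t, h1, h2⟩ := (hev2.and self_mem_nhdsWithin).exists
    exact ⟨t, h2, h1⟩
  have ht0 : 0 < t := by linarith
  set α := J * t with hα
  set β := J / t with hβ
  have hα0 : 0 < α := by positivity
  have hβ0 : 0 < β := by positivity
  have hJα : J < α := by rw [hα]; nlinarith
  have hβJ : β < J := by rw [hβ, div_lt_iff₀ ht0]; nlinarith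
  have hγα : γ / α ≤ 1 := by rw [div_le_one hα0]; linarith
  have hαβ : α / β = t * t := by rw [hα, hβ]; field_simp
  set Q := γ / α * (t * t) ^ (K * k) with hQ
  have hQ0 : 0 ≤ Q := by positivity
  have hs := ls_upper _ c hc s0 s1 γ (show gsr S Λ < γ by linarith)
  have hn := ls_upper _ c hc n0 n1 α hJα
  have hl := ls_lower _ c hc n0 n1 β hβ0.le hβJ
  obtain ⟨N1, hN1⟩ := eventually_atTop.mp hs
  obtain ⟨N2, hN2⟩ := eventually_atTop.mp hn
  set b := (min 1 β) ^ K with hb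
  have hb0 : 0 < b := by positivity
  set c0 := (b / c ^ K) ^ k with hc0
  have hcK : 0 < c ^ K := by positivity
  have hc00 : 0 < c0 := by positivity
  have htend : Tendsto (fun m : ℕ => D ^ k * C * Q ^ m) atTop (𝓝 (D ^ k * C * 0)) :=
    (tendsto_pow_atTop_nhds_zero_of_lt_one hQ0 ht).const_mul _
  rw [mul_zero] at htend
  obtain ⟨N3, hN3⟩ := eventually_atTop.mp (htend.eventually_lt_const hc00)
  obtain ⟨n, ⟨x, hx⟩, hnN⟩ :=
    (hl.and_eventually (eventually_ge_atTop ((N1 + N2 + N3 + 1) * K))).exists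
  have hm : N1 + N2 + N3 + 1 ≤ n / K := (Nat.le_div_iff_mul_le hK).mpr hnN
  set m := n / K with hmdef
  set s := n % K with hsdef
  have hsK : s < K := Nat.mod_lt _ hK
  have hn_eq : n = K * m + s := (Nat.div_add_mod n K).symm
  -- lower bound for the norm at time `K * m`
  have hlow : b / c ^ K * β ^ (K * m) ≤ opNorm (prodS S x.1 (K * m)) := by
    have e1 : opNorm (prodS S x.1 n) ≤ c ^ K * opNorm (prodS S x.1 (K * m)) := by
      rw [hn_eq, prodS_add]
      refine (opNorm_mul_le _ _).trans (mul_le_mul_of_nonneg_right ?_ (opNorm_nonneg _))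
      exact (hgr _ (shift_mem hinv x.1 x.2 _) s).trans (pow_le_pow_right₀ hc hsK.le)
    have e2 : b ≤ β ^ s := by
      have hmin0 : 0 ≤ min 1 β := by positivity
      calc b ≤ (min 1 β) ^ s := pow_le_pow_of_le_one hmin0 (min_le_left _ _) hsK.le
        _ ≤ β ^ s := pow_le_pow_left₀ hmin0 (min_le_right _ _) s
    have e3 : b * β ^ (K * m) ≤ β ^ n := by
      rw [hn_eq, pow_add, mul_comm]
      exact mul_le_mul_of_nonneg_left e2 (by positivity)
    rw [div_mul_eq_mul_div, div_le_iff₀ hcK, mul_comm _ (c ^ K)]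
    exact e3.trans (hx.le.trans e1)
  -- the rescaled blocks
  have hz0 : ((α⁻¹ : ℝ) ^ m : ℝ) ≠ 0 := by positivity
  set z : ℂ := (((α⁻¹ : ℝ) ^ m : ℝ) : ℂ) with hz
  have hz0' : z ≠ 0 := by rw [hz]; exact_mod_cast hz0
  have hznorm : ‖z‖ = (α⁻¹) ^ m := by
    rw [hz, Complex.norm_real, Real.norm_of_nonneg (by positivity)]
  have hmain := hq (fun i => z • prodS S (fun j => x.1 (j + i * m)) m) (by
    intro i p q
    refine (entry_le_opNorm _ p q).trans ?_
    rw [opNorm_smul, hznorm]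
    have := hN2 m (by omega) ⟨_, shift_mem hinv x.1 x.2 (i * m)⟩
    calc _ ≤ (α⁻¹) ^ m * α ^ m := mul_le_mul_of_nonneg_left this (by positivity)
      _ = 1 := by rw [← mul_pow, inv_mul_cancel₀ hα0.ne', one_pow])
    ((γ / α) ^ m) (by positivity) (pow_le_one₀ (by positivity) hγα) (by
    intro a l hl0 _ μ hμ
    rw [seg_prodS] at hμ
    refine (spectrum_smul_bound hd _ _ (pow_ne_zero _ hz0') μ hμ).trans ?_
    rw [norm_pow, hznorm]
    have hlm : m ≤ l * m := Nat.le_mul_of_pos_left m hl0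
    have := hN1 (l * m) (by omega) ⟨_, shift_mem hinv x.1 x.2 (a * m)⟩
    calc _ ≤ ((α⁻¹) ^ m) ^ l * γ ^ (l * m) := mul_le_mul_of_nonneg_left this (by positivity)
      _ = (γ / α) ^ (l * m) := by
        rw [← pow_mul, mul_comm m l, ← mul_pow, mul_comm, ← div_eq_mul_inv]
      _ ≤ (γ / α) ^ m := pow_le_pow_of_le_one (by positivity) hγα hlm)
  rw [seg_prodS] at hmain
  simp only [zero_mul, add_zero] at hmain
  obtain ⟨p, q, hpq⟩ := hent (z ^ K • prodS S x.1 (K * m))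
  rw [opNorm_smul, norm_pow, hznorm] at hpq
  have f1 : b / c ^ K * ((β / α) ^ K) ^ m ≤ D * ‖(z ^ K • prodS S x.1 (K * m)) p q‖ := by
    refine le_trans ?_ hpq
    calc b / c ^ K * ((β / α) ^ K) ^ m = ((α⁻¹) ^ m) ^ K * (b / c ^ K * β ^ (K * m)) := by
          rw [← pow_mul, ← pow_mul, div_eq_mul_inv β α, mul_pow, mul_comm m K]; ring
      _ ≤ _ := mul_le_mul_of_nonneg_left hlow (by positivity)
  have f2 := pow_le_pow_left₀ (by positivity) f1 k
  rw [mul_pow, mul_pow] at f2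
  have f3 : c0 * (((β / α) ^ K) ^ m) ^ k ≤ D ^ k * (C * (γ / α) ^ m) :=
    f2.trans (mul_le_mul_of_nonneg_left (hmain p q) (by positivity))
  have f4 : (((β / α) ^ K) ^ m) ^ k * ((t * t) ^ (K * k)) ^ m = 1 := by
    rw [← hαβ, ← pow_mul, ← pow_mul, ← pow_mul, show K * k * m = K * (m * k) by ring, ← mul_pow,
      div_mul_div_cancel₀ hα0.ne', div_self hβ0.ne', one_pow]
  have f5 : c0 ≤ D ^ k * C * Q ^ m := by
    have hpos : 0 ≤ ((t * t) ^ (K * k)) ^ m := by positivity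
    calc c0 = c0 * (((β / α) ^ K) ^ m) ^ k * ((t * t) ^ (K * k)) ^ m := by
          rw [mul_assoc, f4, mul_one]
      _ ≤ D ^ k * (C * (γ / α) ^ m) * ((t * t) ^ (K * k)) ^ m :=
          mul_le_mul_of_nonneg_right f3 hpos
      _ = _ := by rw [hQ, mul_pow]; ring
  exact absurd f5 (not_le.mpr (hN3 m (by omega)))
end

section
/- Let Ω be a nonempty compact metrizable topological space, T : Ω → Ω continuous, and ⟨f_n⟩_{n≥1} a T-subadditive sequence of continuous real-valued functions on Ω, and set χ = lim_{n→∞} (1/n) sup_{ω∈Ω} f_n(ω). Then there exists a T-ergodic Borel probability measure μ* on Ω such that χ = inf_{ℓ≥1} (1/ℓ) ∫_Ω f_ℓ dμ*, and moreover χ = limsup_{n→∞} (1/n) f_n(ω) for μ*-almost every ω ∈ Ω. -/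
open Filter Topology MeasureTheory

namespace MaxErg

set_option linter.unusedSectionVars false

lemma le_div_of_subadd (u v : ℕ → ℝ) (c : ℝ)
    (hu : ∀ m n, 1 ≤ m → 1 ≤ n → u (m + n) ≤ u m + u n)
    (hv : Tendsto v atTop (𝓝 c)) (hvu : ∀ n, 1 ≤ n → v n ≤ u n / n) (n : ℕ) (hn : 1 ≤ n) :
    c ≤ u n / n := by
  have hmul : ∀ k : ℕ, u ((k + 1) * n) ≤ (k + 1) * u n := by
    intro k
    induction k with
    | zero => simp
    | succ k ih =>
      have h1 := hu ((k + 1) * n) n (Nat.mul_pos (Nat.succ_pos k) hn) hn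
      have h2 : (k + 1 + 1) * n = (k + 1) * n + n := by ring
      rw [h2]; push_cast; linarith
  have hn' : (0 : ℝ) < n := by exact_mod_cast hn
  have ht : Tendsto (fun k : ℕ => (k + 1) * n) atTop atTop :=
    tendsto_atTop_mono (fun k => by simp only [id]; nlinarith) tendsto_id
  refine le_of_tendsto (hv.comp ht) (Eventually.of_forall fun k => ?_)
  have h1 := hvu ((k + 1) * n) (Nat.mul_pos (Nat.succ_pos k) hn)
  refine h1.trans ?_
  have hk : (0 : ℝ) < (k : ℝ) + 1 := by positivity
  push_cast
  rw [div_le_div_iff₀ (by positivity) hn']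
  nlinarith [hmul k]

section
variable {Ω : Type*} [TopologicalSpace Ω] [CompactSpace Ω]

lemma bdd_of_cont (g : Ω → ℝ) (hg : Continuous g) : ∃ B, 0 ≤ B ∧ ∀ x, |g x| ≤ B := by
  obtain ⟨B, hB⟩ := isCompact_univ.exists_bound_of_continuousOn hg.continuousOn
  exact ⟨max B 0, le_max_right _ _, fun x => (hB x trivial).trans (le_max_left _ _)⟩

lemma le_sup (g : Ω → ℝ) (hg : Continuous g) (x : Ω) : g x ≤ ⨆ ω, g ω :=
  le_ciSup (isCompact_range hg).bddAbove x

lemma key (T : Ω → Ω)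
    (f : ℕ → Ω → ℝ) (hcont : ∀ n, 1 ≤ n → Continuous (f n))
    (hsub : ∀ m n : ℕ, 1 ≤ m → 1 ≤ n → ∀ ω : Ω, f (m + n) ω ≤ f n (T^[m] ω) + f m ω)
    (l : ℕ) (hl : 1 ≤ l) :
    ∃ C : ℝ, ∀ n x, l * f (n + l + 1) x ≤ C + ∑ i ∈ Finset.range (n + l + 1), f l (T^[i] x) := by
  choose b hb0 hb using fun j : ℕ => bdd_of_cont (f (j + 1)) (hcont _ (by omega))
  set B := ∑ j ∈ Finset.range l, b j with hB
  have hB0 : 0 ≤ B := Finset.sum_nonneg fun j _ => hb0 j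
  have hBle : ∀ j, 1 ≤ j → j ≤ l → ∀ x, |f j x| ≤ B := by
    intro j hj hjl x
    obtain ⟨i, rfl⟩ : ∃ i, j = i + 1 := ⟨j - 1, by omega⟩
    exact (hb i x).trans (Finset.single_le_sum (f := b) (fun j _ => hb0 j)
      (Finset.mem_range.2 (by omega)))
  refine ⟨l * B + l * B + (l + 1) * B, fun n x => ?_⟩
  have hA : ∑ j ∈ Finset.range l, f (n + 1 + j) x ≤
      l * B + ∑ i ∈ Finset.range n, f l (T^[i + 1] x) := by
    induction n with
    | zero =>
      have : ∑ j ∈ Finset.range l, f (0 + 1 + j) x ≤ ∑ j ∈ Finset.range l, B := by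
        refine Finset.sum_le_sum fun j hj => ?_
        exact (abs_le.1 (hBle _ (by omega) (by have := Finset.mem_range.1 hj; omega) x)).2
      simpa using this
    | succ n ih =>
      have h1 := Finset.sum_range_succ (fun j => f (n + 1 + j) x) l
      have h2 := Finset.sum_range_succ' (fun j => f (n + 1 + j) x) l
      have h3 := hsub (n + 1) l (by omega) hl x
      rw [Finset.sum_range_succ]
      have h4 : ∑ j ∈ Finset.range l, f (n + 1 + 1 + j) x
          = ∑ j ∈ Finset.range l, f (n + 1 + (j + 1)) x :=
        Finset.sum_congr rfl fun j _ => by rw [show n + 1 + 1 + j = n + 1 + (j + 1) by ring]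
      rw [h4]
      simp only [add_zero] at h2
      linarith
  have hL : l * f (n + l + 1) x ≤ ∑ j ∈ Finset.range l, f (n + 1 + j) x + l * B := by
    have : ∑ j ∈ Finset.range l, f (n + l + 1) x ≤
        ∑ j ∈ Finset.range l, (f (n + 1 + j) x + B) := by
      refine Finset.sum_le_sum fun j hj => ?_
      have hj' := Finset.mem_range.1 hj
      have h1 := hsub (n + 1 + j) (l - j) (by omega) (by omega) x
      rw [show n + 1 + j + (l - j) = n + l + 1 by omega] at h1
      have h2 := (abs_le.1 (hBle (l - j) (by omega) (by omega) (T^[n + 1 + j] x))).2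
      linarith
    simpa [Finset.sum_add_distrib] using this
  have hS : ∑ i ∈ Finset.range n, f l (T^[i + 1] x) - (l + 1) * B ≤
      ∑ i ∈ Finset.range (n + l + 1), f l (T^[i] x) := by
    rw [Finset.sum_range_succ', Finset.sum_range_add]
    have h0 := (abs_le.1 (hBle l hl le_rfl (T^[0] x))).1
    have : ∑ j ∈ Finset.range l, (-B) ≤ ∑ j ∈ Finset.range l, f l (T^[n + j + 1] x) :=
      Finset.sum_le_sum fun j hj => (abs_le.1 (hBle l hl le_rfl _)).1
    simp only [Finset.sum_const, Finset.card_range, nsmul_eq_mul] at this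
    linarith
  linarith

variable [MeasurableSpace Ω] [BorelSpace Ω]

lemma integrable_of_cont (μ : Measure Ω) [IsFiniteMeasure μ] (g : Ω → ℝ) (hg : Continuous g) :
    Integrable g μ :=
  hg.integrable_of_hasCompactSupport (HasCompactSupport.of_compactSpace g)

lemma integral_le_sup (μ : Measure Ω) [IsProbabilityMeasure μ] (g : Ω → ℝ) (hg : Continuous g) :
    ∫ x, g x ∂μ ≤ ⨆ ω, g ω := by
  have := integral_mono (integrable_of_cont μ g hg) (integrable_const (⨆ ω, g ω))
    (fun x => le_sup g hg x)
  simpa using this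

lemma le_sup_div [Nonempty Ω] (T : Ω → Ω)
    (f : ℕ → Ω → ℝ) (hcont : ∀ n, 1 ≤ n → Continuous (f n))
    (hsub : ∀ m n : ℕ, 1 ≤ m → 1 ≤ n → ∀ ω : Ω, f (m + n) ω ≤ f n (T^[m] ω) + f m ω)
    (χ : ℝ)
    (hχ : Filter.Tendsto (fun n : ℕ => (⨆ ω : Ω, f n ω) / n) Filter.atTop (nhds χ))
    (n : ℕ) (hn : 1 ≤ n) : χ ≤ (⨆ ω : Ω, f n ω) / n := by
  refine le_div_of_subadd (fun n => ⨆ ω : Ω, f n ω) _ χ ?_ hχ (fun n _ => le_rfl) n hn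
  intro m n hm hn
  refine ciSup_le fun x => (hsub m n hm hn x).trans ?_
  have h1 := le_sup (f n) (hcont n hn) (T^[m] x)
  have h2 := le_sup (f m) (hcont m hm) x
  linarith

lemma subadd_integral (T : Ω → Ω)
    (f : ℕ → Ω → ℝ) (hcont : ∀ n, 1 ≤ n → Continuous (f n))
    (hsub : ∀ m n : ℕ, 1 ≤ m → 1 ≤ n → ∀ ω : Ω, f (m + n) ω ≤ f n (T^[m] ω) + f m ω)
    (hT : Continuous T)
    (μ : Measure Ω) [IsProbabilityMeasure μ] (hμ : MeasurePreserving T μ μ)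
    (m n : ℕ) (hm : 1 ≤ m) (hn : 1 ≤ n) :
    ∫ x, f (m + n) x ∂μ ≤ ∫ x, f m x ∂μ + ∫ x, f n x ∂μ := by
  have hc := (hcont n hn).comp (hT.iterate m)
  have h1 : ∫ x, f (m + n) x ∂μ ≤ ∫ x, (f n (T^[m] x) + f m x) ∂μ :=
    integral_mono (integrable_of_cont μ _ (hcont _ (by omega)))
      (integrable_of_cont μ _ (hc.add (hcont m hm))) (hsub m n hm hn)
  have h3 : ∫ x, (f n (T^[m] x) + f m x) ∂μ = ∫ x, f n (T^[m] x) ∂μ + ∫ x, f m x ∂μ :=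
    integral_add (integrable_of_cont μ _ hc) (integrable_of_cont μ _ (hcont m hm))
  have hp := hμ.iterate m
  have h2 : ∫ x, f n (T^[m] x) ∂μ = ∫ x, f n x ∂μ := by
    conv_rhs => rw [← hp.map_eq]
    rw [integral_map hp.measurable.aemeasurable]
    exact (hcont n hn).measurable.aestronglyMeasurable
  linarith

variable [TopologicalSpace.MetrizableSpace Ω] 

lemma exists_emp (T : Ω → Ω) (n : ℕ) (x : Ω) : ∃ μ : ProbabilityMeasure Ω,
    ∀ g : Ω → ℝ, ∫ y, g y ∂(μ : Measure Ω) =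
      (∑ i ∈ Finset.range (n + 1), g (T^[i] x)) / ((n + 1 : ℕ) : ℝ) := by
  let μ : Measure Ω := ((n + 1 : ℕ) : ENNReal)⁻¹ •
    ∑ i ∈ Finset.range (n + 1), Measure.dirac (T^[i] x)
  have hμ : IsProbabilityMeasure μ := by
    constructor
    simp only [μ, Measure.smul_apply, Measure.finsetSum_apply, measure_univ, Finset.sum_const,
      Finset.card_range, smul_eq_mul, nsmul_eq_mul, mul_one]
    exact ENNReal.inv_mul_cancel (by simp) (ENNReal.natCast_ne_top _)
  refine ⟨⟨μ, hμ⟩, fun g => ?_⟩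
  simp only [μ, ProbabilityMeasure.coe_mk]
  rw [integral_smul_measure, integral_finsetSum_measure]
  · simp only [integral_dirac, ENNReal.toReal_inv, div_eq_inv_mul, ENNReal.toReal_natCast, smul_eq_mul]
  · intro i _
    exact integrable_dirac (by simp)

lemma measurePreserving_of_integral (T : Ω → Ω) (hT : Continuous T) (μ : Measure Ω)
    [IsProbabilityMeasure μ]
    (h : ∀ g : Ω → ℝ, Continuous g → ∫ y, g (T y) ∂μ = ∫ y, g y ∂μ) :
    MeasurePreserving T μ μ := by
  refine ⟨hT.measurable, ?_⟩
  have := Measure.isProbabilityMeasure_map (μ := μ) hT.measurable.aemeasurable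
  refine ext_of_forall_integral_eq_of_IsFiniteMeasure fun g => ?_
  rw [integral_map hT.measurable.aemeasurable g.continuous.measurable.aestronglyMeasurable]
  exact h g g.continuous

lemma integral_comp_of_mp (T : Ω → Ω) (μ : Measure Ω)
    (h : MeasurePreserving T μ μ) (g : Ω → ℝ) (hg : Continuous g) :
    ∫ y, g (T y) ∂μ = ∫ y, g y ∂μ := by
  conv_rhs => rw [← h.map_eq]
  rw [integral_map h.measurable.aemeasurable hg.measurable.aestronglyMeasurable]

lemma cont_integral (g : Ω → ℝ) (hg : Continuous g) :
    Continuous fun μ : ProbabilityMeasure Ω => ∫ y, g y ∂(μ : Measure Ω) :=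
  ProbabilityMeasure.continuous_integral_continuousMap (⟨g, hg⟩ : C(Ω, ℝ))

lemma exists_inv [Nonempty Ω] (T : Ω → Ω) (hT : Continuous T)
    (f : ℕ → Ω → ℝ) (hcont : ∀ n, 1 ≤ n → Continuous (f n))
    (hsub : ∀ m n : ℕ, 1 ≤ m → 1 ≤ n → ∀ ω : Ω, f (m + n) ω ≤ f n (T^[m] ω) + f m ω)
    (χ : ℝ)
    (hχ : Filter.Tendsto (fun n : ℕ => (⨆ ω : Ω, f n ω) / n) Filter.atTop (nhds χ)) :
    ∃ μ : ProbabilityMeasure Ω, (∀ g : Ω → ℝ, Continuous g →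
      ∫ y, g (T y) ∂(μ : Measure Ω) = ∫ y, g y ∂(μ : Measure Ω)) ∧
      ∀ l : ℕ, 1 ≤ l → l * χ ≤ ∫ y, f l y ∂(μ : Measure Ω) := by
  have hmax : ∀ n : ℕ, ∃ x, f (n + 1) x = ⨆ ω, f (n + 1) ω := by
    intro n
    obtain ⟨x, -, hx⟩ := isCompact_univ.exists_isMaxOn Set.univ_nonempty
      (hcont (n + 1) (by omega)).continuousOn
    exact ⟨x, le_antisymm (le_sup _ (hcont (n + 1) (by omega)) x) (ciSup_le fun y => hx trivial)⟩
  choose x hx using hmax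
  choose ν hν using fun n => exists_emp T n (x n)
  let F : Ultrafilter (ProbabilityMeasure Ω) := (hyperfilter ℕ).map ν
  obtain ⟨μ, hμ⟩ : ∃ μ, (F : Filter (ProbabilityMeasure Ω)) ≤ 𝓝 μ := by
    obtain ⟨μ, -, h⟩ := isCompact_univ.ultrafilter_le_nhds F (by simp)
    exact ⟨μ, h⟩
  have hμ' : Tendsto ν (hyperfilter ℕ : Filter ℕ) (𝓝 μ) := hμ
  have hle : (hyperfilter ℕ : Filter ℕ) ≤ atTop := by
    rw [← Nat.cofinite_eq_atTop]; exact hyperfilter_le_cofinite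
  have hlim : ∀ g : Ω → ℝ, Continuous g → Tendsto (fun n : ℕ =>
      (∑ i ∈ Finset.range (n + 1), g (T^[i] (x n))) / ((n + 1 : ℕ) : ℝ))
      (hyperfilter ℕ : Filter ℕ) (𝓝 (∫ y, g y ∂(μ : Measure Ω))) := by
    intro g hg
    have := ((cont_integral g hg).tendsto μ).comp hμ'
    exact this.congr fun n => hν n g
  have hz : ∀ C : ℝ, Tendsto (fun n : ℕ => C / ((n + 1 : ℕ) : ℝ)) atTop (𝓝 0) := fun C =>
    (tendsto_const_div_atTop_nhds_zero_nat C).comp (tendsto_add_atTop_nat 1)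
  refine ⟨μ, fun g hg => ?_, fun l hl => ?_⟩
  · have h1 := (hlim _ (hg.comp hT)).sub (hlim g hg)
    obtain ⟨B, hB0, hB⟩ := bdd_of_cont g hg
    have h2 := squeeze_zero_norm (a := fun n : ℕ => (2 * B) / ((n + 1 : ℕ) : ℝ)) (f := fun n : ℕ =>
      (∑ i ∈ Finset.range (n + 1), (g ∘ T) (T^[i] (x n))) / ((n + 1 : ℕ) : ℝ) -
      (∑ i ∈ Finset.range (n + 1), g (T^[i] (x n))) / ((n + 1 : ℕ) : ℝ))
      (t₀ := (hyperfilter ℕ : Filter ℕ)) ?_ ((hz (2 * B)).mono_left hle)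
    · exact sub_eq_zero.1 (tendsto_nhds_unique h1 h2)
    · intro n
      have hn : (0 : ℝ) < ((n + 1 : ℕ) : ℝ) := by positivity
      rw [← sub_div, norm_div, Real.norm_of_nonneg hn.le]
      refine div_le_div_of_nonneg_right ?_ hn.le
      rw [← Finset.sum_sub_distrib]
      have h3 : ∀ i, (g ∘ T) (T^[i] (x n)) - g (T^[i] (x n)) =
          (fun i => g (T^[i] (x n))) (i + 1) - (fun i => g (T^[i] (x n))) i := fun i => by
        simp [Function.iterate_succ_apply']
      rw [Finset.sum_congr rfl (fun i _ => h3 i), Finset.sum_range_sub (fun i => g (T^[i] (x n)))]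
      refine (norm_sub_le _ _).trans ?_
      have h4 := hB (T^[n + 1] (x n))
      have h5 := hB (T^[0] (x n))
      simp only [Real.norm_eq_abs]
      linarith
  · obtain ⟨C, hC⟩ := key T f hcont hsub l hl
    have h1 := hlim _ (hcont l hl)
    have h2 : Tendsto (fun n : ℕ => l * ((⨆ ω : Ω, f (n + 1) ω) / ((n + 1 : ℕ) : ℝ)) -
        C / ((n + 1 : ℕ) : ℝ)) atTop (𝓝 (l * χ - 0)) :=
      ((hχ.comp (tendsto_add_atTop_nat 1)).const_mul (l : ℝ)).sub (hz C)
    rw [sub_zero] at h2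
    refine le_of_tendsto_of_tendsto (h2.mono_left hle) h1 (hle ?_)
    filter_upwards [eventually_ge_atTop l] with n hn
    obtain ⟨k, rfl⟩ := Nat.exists_eq_add_of_le' hn
    have h3 := hC k (x (k + l))
    rw [hx] at h3
    have hn : (0 : ℝ) < ((k + l + 1 : ℕ) : ℝ) := by positivity
    rw [← mul_div_assoc, ← sub_div]
    refine div_le_div_of_nonneg_right ?_ hn.le
    linarith

lemma exists_erg [Nonempty Ω] (T : Ω → Ω) (hT : Continuous T)
    (f : ℕ → Ω → ℝ) (hcont : ∀ n, 1 ≤ n → Continuous (f n))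
    (hsub : ∀ m n : ℕ, 1 ≤ m → 1 ≤ n → ∀ ω : Ω, f (m + n) ω ≤ f n (T^[m] ω) + f m ω)
    (χ : ℝ)
    (hχ : Filter.Tendsto (fun n : ℕ => (⨆ ω : Ω, f n ω) / n) Filter.atTop (nhds χ)) :
    ∃ μ : Measure Ω, IsProbabilityMeasure μ ∧ Ergodic T μ ∧
      ∀ l : ℕ, 1 ≤ l → l * χ ≤ ∫ y, f l y ∂μ := by
  let K : Set (ProbabilityMeasure Ω) := {μ | (∀ g : Ω → ℝ, Continuous g →
      ∫ y, g (T y) ∂(μ : Measure Ω) = ∫ y, g y ∂(μ : Measure Ω)) ∧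
      ∀ l : ℕ, 1 ≤ l → l * χ ≤ ∫ y, f l y ∂(μ : Measure Ω)}
  have hKne : K.Nonempty := exists_inv T hT f hcont hsub χ hχ
  have hKc : IsClosed K := by
    simp only [K, Set.ofPred_and, Set.ofPred_forall]
    refine IsClosed.inter ?_ ?_
    · exact isClosed_iInter fun g => isClosed_iInter fun hg =>
        isClosed_eq (cont_integral _ (hg.comp hT)) (cont_integral g hg)
    · exact isClosed_iInter fun l => isClosed_iInter fun hl =>
        isClosed_le continuous_const (cont_integral _ (hcont l hl))
  let Φ : ProbabilityMeasure Ω → (C(Ω, ℝ) → ℝ) := fun μ g => ∫ y, g y ∂(μ : Measure Ω)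
  have hΦ : Continuous Φ := continuous_pi fun g => cont_integral g g.continuous
  obtain ⟨-, ⟨⟨μ, hμ, rfl⟩, hext⟩⟩ :=
    ((hKc.isCompact).image hΦ).extremePoints_nonempty (hKne.image Φ)
  have hinv : MeasurePreserving T (μ : Measure Ω) μ := measurePreserving_of_integral T hT _ hμ.1
  refine ⟨μ, inferInstance, ?_, hμ.2⟩
  refine Ergodic.of_mem_extremePoints ?_
  rw [mem_extremePoints_iff_left]
  refine ⟨⟨hinv, inferInstance⟩, ?_⟩
  rintro ν₁ ⟨hi₁, hp₁⟩ ν₂ ⟨hi₂, hp₂⟩ ⟨a, b, ha, hb, hab, hμe⟩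
  have ha' : a ≠ ⊤ := by rintro rfl; simp at hab
  have hb' : b ≠ ⊤ := by rintro rfl; simp at hab
  have ha0 : 0 < a.toReal := ENNReal.toReal_pos ha.ne' ha'
  have hb0 : 0 < b.toReal := ENNReal.toReal_pos hb.ne' hb'
  have habr : a.toReal + b.toReal = 1 := by
    rw [← ENNReal.toReal_add ha' hb', hab]; simp
  have hint : ∀ g : Ω → ℝ, Continuous g → ∫ y, g y ∂(μ : Measure Ω) =
      a.toReal * ∫ y, g y ∂ν₁ + b.toReal * ∫ y, g y ∂ν₂ := by
    intro g hg
    rw [← hμe, integral_add_measure ((integrable_of_cont ν₁ g hg).smul_measure ha')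
      ((integrable_of_cont ν₂ g hg).smul_measure hb'), integral_smul_measure,
      integral_smul_measure]
    rfl
  have aux : ∀ (ν ν' : Measure Ω) [IsProbabilityMeasure ν] [IsProbabilityMeasure ν'] (s t : ℝ),
      MeasurePreserving T ν ν → 0 < s → 0 < t → s + t = 1 →
      (∀ g : Ω → ℝ, Continuous g → ∫ y, g y ∂(μ : Measure Ω) =
      s * ∫ y, g y ∂ν + t * ∫ y, g y ∂ν') → ∀ l : ℕ, 1 ≤ l → l * χ ≤ ∫ y, f l y ∂ν := by
    intro ν ν' _ _ s t hν hs ht hst hg l hl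
    have hl' : (0 : ℝ) < l := by exact_mod_cast hl
    have h1 : Tendsto (fun n : ℕ => (χ - t * ((⨆ ω : Ω, f n ω) / n)) / s) atTop (𝓝 χ) := by
      have := ((hχ.const_mul t).const_sub χ).div_const s
      have he : (χ - t * χ) / s = χ := by
        rw [div_eq_iff hs.ne']; linear_combination -χ * hst
      rwa [he] at this
    have h2 := le_div_of_subadd (fun n => ∫ y, f n y ∂ν) _ χ
      (subadd_integral T f hcont hsub hT ν hν) h1 ?_ l hl
    · rw [le_div_iff₀ hl'] at h2; linarith
    · intro n hn
      have hn' : (0 : ℝ) < n := by exact_mod_cast hn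
      have h3 := hμ.2 n hn
      rw [hg _ (hcont n hn)] at h3
      have h4 := mul_le_mul_of_nonneg_left (integral_le_sup ν' (f n) (hcont n hn)) ht.le
      rw [div_le_div_iff₀ hs hn', sub_mul, mul_assoc, div_mul_cancel₀ _ hn'.ne']
      linarith
  have hk₁ : (⟨ν₁, hp₁⟩ : ProbabilityMeasure Ω) ∈ K :=
    ⟨fun g hg => integral_comp_of_mp T ν₁ hi₁ g hg, aux ν₁ ν₂ _ _ hi₁ ha0 hb0 habr hint⟩
  have hk₂ : (⟨ν₂, hp₂⟩ : ProbabilityMeasure Ω) ∈ K :=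
    ⟨fun g hg => integral_comp_of_mp T ν₂ hi₂ g hg, aux ν₂ ν₁ _ _ hi₂ hb0 ha0
      (by linarith) (fun g hg => by rw [hint g hg]; ring)⟩
  have hfin := hext (Set.mem_image_of_mem Φ hk₁) (Set.mem_image_of_mem Φ hk₂)
    ⟨_, _, ha0, hb0, habr, by
      funext g
      simp only [Φ, Pi.add_apply, Pi.smul_apply, smul_eq_mul]
      exact (hint g g.continuous).symm⟩
  refine ext_of_forall_integral_eq_of_IsFiniteMeasure fun g => ?_
  exact congrFun hfin (g : C(Ω, ℝ))

lemma ae_freq (f : ℕ → Ω → ℝ) (hcont : ∀ n, 1 ≤ n → Continuous (f n))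
    (χ : ℝ)
    (hχ : Filter.Tendsto (fun n : ℕ => (⨆ ω : Ω, f n ω) / n) Filter.atTop (nhds χ))
    (hle : ∀ n : ℕ, 1 ≤ n → χ ≤ (⨆ ω : Ω, f n ω) / n)
    (μ : Measure Ω) [IsProbabilityMeasure μ] 
    (hμ : ∀ l : ℕ, 1 ≤ l → l * χ ≤ ∫ y, f l y ∂μ) (ε : ℝ) (hε : 0 < ε) :
    ∀ᵐ ω ∂μ, ∃ᶠ n : ℕ in atTop, χ - ε ≤ f n ω / n := by
  simp only [frequently_atTop]
  rw [ae_all_iff]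
  intro N
  rw [ae_iff]
  set A := {ω | ¬ ∃ n ≥ N, χ - ε ≤ f n ω / n} with hA
  have hAr : μ.real A = 0 := by
    refine le_antisymm ?_ measureReal_nonneg
    have hlim : Tendsto (fun n : ℕ => ((⨆ ω : Ω, f n ω) / n - χ) / ε) atTop (𝓝 0) := by
      have := (hχ.sub_const χ).div_const ε
      simpa using this
    refine ge_of_tendsto hlim ?_
    filter_upwards [eventually_ge_atTop N, eventually_ge_atTop 1] with n hn hn1
    have hn' : (0 : ℝ) < n := by exact_mod_cast hn1
    have hc : Continuous fun x => (⨆ ω : Ω, f n ω) / n - f n x / n :=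
      continuous_const.sub ((hcont n hn1).div_const _)
    have hm := mul_meas_ge_le_integral_of_nonneg (μ := μ)
      (f := fun x => (⨆ ω : Ω, f n ω) / n - f n x / n)
      (Eventually.of_forall fun x => sub_nonneg.2
        (div_le_div_of_nonneg_right (le_sup _ (hcont n hn1) x) hn'.le))
      (integrable_of_cont μ _ hc) ε
    rw [integral_sub (integrable_const _) (integrable_of_cont μ _ ((hcont n hn1).div_const _)),
      integral_div _ (f n)] at hm
    simp only [integral_const, probReal_univ, one_smul] at hm
    have h1 : χ ≤ (∫ x, f n x ∂μ) / n := by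
      rw [le_div_iff₀ hn', mul_comm]; exact hμ n hn1
    have h2 : μ.real A ≤ μ.real {x | ε ≤ (⨆ ω : Ω, f n ω) / n - f n x / n} := by
      refine measureReal_mono ?_
      intro x hx
      simp only [hA, Set.mem_ofPred_eq, not_exists, not_and, not_le] at hx ⊢
      linarith [hx n hn, hle n hn1]
    rw [le_div_iff₀ hε]
    nlinarith
  exact (measureReal_eq_zero_iff).1 hAr

end

end MaxErg

/-- **Lemma 2.5 (existence of a maximizing ergodic measure).**
For a `T`-subadditive sequence of continuous functions on a nonempty compact metrizable
space with joint growth rate `χ`, there is a `T`-ergodic Borel probability measure `μ*`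
with `χ = inf_{ℓ ≥ 1} (1/ℓ) ∫ f_ℓ dμ*`, and moreover `χ = limsup (1/n) f_n(ω)` for
`μ*`-almost every `ω`. -/
theorem exists_maximizing_ergodic_measure
    {Ω : Type*} [TopologicalSpace Ω] [CompactSpace Ω] [TopologicalSpace.MetrizableSpace Ω]
    [Nonempty Ω] [MeasurableSpace Ω] [BorelSpace Ω]
    (T : Ω → Ω) (hT : Continuous T)
    (f : ℕ → Ω → ℝ) (hcont : ∀ n, 1 ≤ n → Continuous (f n))
    (hsub : ∀ m n : ℕ, 1 ≤ m → 1 ≤ n → ∀ ω : Ω, f (m + n) ω ≤ f n (T^[m] ω) + f m ω)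
    (χ : ℝ)
    (hχ : Filter.Tendsto (fun n : ℕ => (⨆ ω : Ω, f n ω) / n) Filter.atTop (nhds χ)) :
    ∃ μ : Measure Ω, IsProbabilityMeasure μ ∧ Ergodic T μ ∧
      χ = (⨅ ℓ : ℕ, (∫ ω, f (ℓ + 1) ω ∂μ) / (ℓ + 1)) ∧
      ∀ᵐ ω ∂μ, (χ : EReal) =
        Filter.limsup (fun n : ℕ => ((f n ω / n : ℝ) : EReal)) Filter.atTop := by
  obtain ⟨μ, hp, herg, hμ⟩ := MaxErg.exists_erg T hT f hcont hsub χ hχ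
  have hle := MaxErg.le_sup_div T f hcont hsub χ hχ
  have hlow : ∀ l : ℕ, χ ≤ (∫ ω, f (l + 1) ω ∂μ) / ((l : ℝ) + 1) := by
    intro l
    have h := hμ (l + 1) (by omega)
    push_cast at h
    rw [le_div_iff₀ (by positivity)]
    linarith
  refine ⟨μ, hp, herg, ?_, ?_⟩
  · refine le_antisymm (le_ciInf hlow) ?_
    refine ge_of_tendsto (hχ.comp (tendsto_add_atTop_nat 1)) (Eventually.of_forall fun l => ?_)
    refine (ciInf_le ⟨χ, by rintro _ ⟨l, rfl⟩; exact hlow l⟩ l).trans ?_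
    have := MaxErg.integral_le_sup μ (f (l + 1)) (hcont _ (by omega))
    simp only [Function.comp_apply]
    push_cast
    exact div_le_div_of_nonneg_right this (by positivity)
  · have hae : ∀ᵐ ω ∂μ, ∀ k : ℕ, ∃ᶠ n : ℕ in atTop, χ - 1 / ((k : ℝ) + 1) ≤ f n ω / n :=
      ae_all_iff.2 fun k => MaxErg.ae_freq f hcont χ hχ hle μ hμ _ (by positivity)
    filter_upwards [hae] with ω hω
    refine le_antisymm ?_ ?_
    · have ht : Tendsto (fun k : ℕ => ((χ - 1 / ((k : ℝ) + 1) : ℝ) : EReal)) atTop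
          (𝓝 (χ : EReal)) := by
        have := (tendsto_one_div_add_atTop_nhds_zero_nat (𝕜 := ℝ)).const_sub χ
        rw [sub_zero] at this
        exact (continuous_coe_real_ereal.tendsto χ).comp this
      refine le_of_tendsto ht (Eventually.of_forall fun k => ?_)
      refine le_limsup_of_frequently_le ((hω k).mono fun n hn => ?_)
      exact_mod_cast hn
    · have ht : Tendsto (fun n : ℕ => (((⨆ ω : Ω, f n ω) / n : ℝ) : EReal)) atTop
          (𝓝 (χ : EReal)) := (continuous_coe_real_ereal.tendsto χ).comp hχ
      rw [← ht.limsup_eq]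
      refine limsup_le_limsup ?_
      filter_upwards [eventually_ge_atTop 1] with n hn
      have := div_le_div_of_nonneg_right (MaxErg.le_sup _ (hcont n hn) ω) (Nat.cast_nonneg (α := ℝ) n)
      exact_mod_cast this
end

section
/- (Semi-uniform subadditive ergodic theorem.) Let Ω be a nonempty compact metrizable topological space, T : Ω → Ω continuous, and ⟨f_n⟩_{n≥1} a T-subadditive sequence of continuous real-valued functions on Ω. Suppose α ∈ ℝ is such that inf_{n≥1} (1/n) ∫_Ω f_n dμ < α for every T-ergodic Borel probability measure μ on Ω. Then there exists an integer N ≥ 1 such that for every ℓ ≥ N, sup_{ω∈Ω} (1/ℓ) f_ℓ(ω) < α. -/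
open Filter Topology MeasureTheory

set_option linter.unusedSectionVars false
set_option linter.style.haveILetI false

namespace SUSE

section aux

variable {Ω : Type*} [TopologicalSpace Ω] [CompactSpace Ω] [TopologicalSpace.MetrizableSpace Ω]
    [MeasurableSpace Ω] [BorelSpace Ω]

lemma integrable_cont (μ : Measure Ω) [IsFiniteMeasure μ] {g : Ω → ℝ} (hg : Continuous g) :
    Integrable g μ :=
  (BoundedContinuousFunction.mkOfCompact ⟨g, hg⟩).integrable μ

lemma cont_int {g : Ω → ℝ} (hg : Continuous g) :
    Continuous fun μ : ProbabilityMeasure Ω => ∫ x, g x ∂(μ : Measure Ω) :=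
  ProbabilityMeasure.continuous_integral_boundedContinuousFunction
    (BoundedContinuousFunction.mkOfCompact ⟨g, hg⟩)

lemma ext_int {μ ν : Measure Ω} [IsFiniteMeasure μ] [IsFiniteMeasure ν]
    (h : ∀ g : Ω → ℝ, Continuous g → ∫ x, g x ∂μ = ∫ x, g x ∂ν) : μ = ν := by
  letI := TopologicalSpace.metrizableSpaceMetric Ω
  exact ext_of_forall_integral_eq_of_IsFiniteMeasure (fun f => h f f.continuous)

lemma inv_of_int {T : Ω → Ω} (hT : Continuous T) {μ : Measure Ω} [IsProbabilityMeasure μ]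
    (h : ∀ g : Ω → ℝ, Continuous g → ∫ x, g (T x) ∂μ = ∫ x, g x ∂μ) :
    MeasurePreserving T μ μ := by
  refine ⟨hT.measurable, ?_⟩
  haveI : IsProbabilityMeasure (μ.map T) :=
    Measure.isProbabilityMeasure_map hT.measurable.aemeasurable
  refine ext_int fun g hg => ?_
  rw [integral_map hT.measurable.aemeasurable hg.aestronglyMeasurable, h g hg]

lemma int_of_inv {T : Ω → Ω} (hT : Continuous T) {μ : Measure Ω}
    (h : MeasurePreserving T μ μ) {g : Ω → ℝ} (hg : Continuous g) :
    ∫ x, g (T x) ∂μ = ∫ x, g x ∂μ := by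
  conv_rhs => rw [← h.map_eq]
  rw [integral_map hT.measurable.aemeasurable hg.aestronglyMeasurable]

lemma cond_inv {T : Ω → Ω} {μ : Measure Ω} (h : MeasurePreserving T μ μ) {A : Set Ω}
    (hA : MeasurableSet A) (hTA : T ⁻¹' A = A) :
    MeasurePreserving T (ProbabilityTheory.cond μ A) (ProbabilityTheory.cond μ A) := by
  have := h.restrict_preimage hA
  rw [hTA] at this
  exact this.smul_measure _

lemma cond_split {μ : Measure Ω} [IsProbabilityMeasure μ] {A : Set Ω}
    (hA : MeasurableSet A) (h1 : μ A ≠ 0) (h2 : μ Aᶜ ≠ 0) :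
    ∃ t : ℝ, 0 < t ∧ t < 1 ∧ ∀ g : Ω → ℝ, Continuous g →
      ∫ x, g x ∂μ = t * ∫ x, g x ∂(ProbabilityTheory.cond μ A)
        + (1 - t) * ∫ x, g x ∂(ProbabilityTheory.cond μ Aᶜ) := by
  have e : μ.real Aᶜ = 1 - μ.real A := probReal_compl_eq_one_sub hA
  have p1 : 0 < μ.real A := by
    rw [Measure.real]; exact ENNReal.toReal_pos h1 (measure_ne_top _ _)
  have p2 : 0 < μ.real Aᶜ := by
    rw [Measure.real]; exact ENNReal.toReal_pos h2 (measure_ne_top _ _)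
  refine ⟨μ.real A, p1, by linarith, fun g hg => ?_⟩
  rw [← e, ← integral_add_compl hA (integrable_cont μ hg)]
  simp only [ProbabilityTheory.cond, integral_smul_measure, ENNReal.toReal_inv, smul_eq_mul]
  change _ = μ.real A * ((μ.real A)⁻¹ * _) + μ.real Aᶜ * ((μ.real Aᶜ)⁻¹ * _)
  rw [mul_inv_cancel_left₀ p1.ne', mul_inv_cancel_left₀ p2.ne']

/-- Closed under conditioning on invariant sets. -/
def CondClosed (T : Ω → Ω) (F : Set (ProbabilityMeasure Ω)) : Prop :=
  ∀ μ ∈ F, ∀ A : Set Ω, MeasurableSet A → T ⁻¹' A = A → (μ : Measure Ω) A ≠ 0 →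
    (μ : Measure Ω) Aᶜ ≠ 0 → ∀ ν : ProbabilityMeasure Ω,
    (ν : Measure Ω) = ProbabilityTheory.cond (μ : Measure Ω) A → ν ∈ F

lemma exists_ergodic {T : Ω → Ω}
    (F₀ : Set (ProbabilityMeasure Ω)) (hcl : IsClosed F₀) (hne : F₀.Nonempty)
    (hinv : ∀ μ ∈ F₀, MeasurePreserving T (μ : Measure Ω) μ) (hcc : CondClosed T F₀) :
    ∃ μ ∈ F₀, Ergodic T (μ : Measure Ω) := by
  obtain ⟨F, hF0, hF⟩ := zorn_superset_nonempty
    {F : Set (ProbabilityMeasure Ω) | IsClosed F ∧ F.Nonempty ∧ CondClosed T F} (by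
      intro c hc hch hcn
      refine ⟨⋂₀ c, ⟨isClosed_sInter fun s hs => (hc hs).1, ?_, ?_⟩,
        fun s hs => Set.sInter_subset_of_mem hs⟩
      · haveI := hcn.to_subtype
        refine IsCompact.nonempty_sInter_of_directed_nonempty_isCompact_isClosed
          (fun x hx y hy => (hch.total hx hy).elim
            (fun h => ⟨x, hx, subset_rfl, h⟩) (fun h => ⟨y, hy, h, subset_rfl⟩)) (fun s hs => (hc hs).2.1)
          (fun s hs => (hc hs).1.isCompact) (fun s hs => (hc hs).1)
      · intro μ hμ A hA hTA h1 h2 ν hν s hs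
        exact (hc hs).2.2 μ (hμ s hs) A hA hTA h1 h2 ν hν) F₀ ⟨hcl, hne, hcc⟩
  obtain ⟨⟨Fcl, ⟨μ, hμ⟩, Fcc⟩, hmin⟩ := hF
  have key : ∀ g : Ω → ℝ, Continuous g → ∀ μ ∈ F, ∀ ν ∈ F,
      ∫ x, g x ∂(μ : Measure Ω) ≤ ∫ x, g x ∂(ν : Measure Ω) := by
    intro g hg μ hμ ν hν
    obtain ⟨m, hm, hmax⟩ := Fcl.isCompact.exists_isMaxOn ⟨μ, hμ⟩ (cont_int hg).continuousOn
    have hmax' : ∀ ρ ∈ F, ∫ x, g x ∂(ρ : Measure Ω) ≤ ∫ x, g x ∂(m : Measure Ω) :=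
      fun ρ hρ => hmax hρ
    have := @hmin (F ∩ {ρ | ∫ x, g x ∂(m : Measure Ω) ≤ ∫ x, g x ∂(ρ : Measure Ω)}) (by
      refine ⟨Fcl.inter (isClosed_le continuous_const (cont_int hg)), ⟨m, hm, by simp⟩, ?_⟩
      intro ρ hρ A hA hTA h1 h2 σ hσ
      have hσF := Fcc ρ hρ.1 A hA hTA h1 h2 σ hσ
      refine ⟨hσF, ?_⟩
      obtain ⟨t, t0, t1, ht⟩ := cond_split hA h1 h2
      haveI := ProbabilityTheory.cond_isProbabilityMeasure h2
      have hτ := Fcc ρ hρ.1 Aᶜ hA.compl (by rw [Set.preimage_compl, hTA]) h2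
        (by rwa [compl_compl]) ⟨ProbabilityTheory.cond (ρ : Measure Ω) Aᶜ, this⟩ rfl
      have e := ht g hg
      have b := hmax' _ hτ
      have a := hρ.2
      simp only [Set.mem_setOf_eq, ProbabilityMeasure.coe_mk] at a b ⊢
      rw [← hσ] at e
      by_contra! hlt
      nlinarith [mul_lt_mul_of_pos_left hlt t0,
        mul_le_mul_of_nonneg_left b (sub_nonneg.2 t1.le)]) Set.inter_subset_left
    exact (hmax' μ hμ).trans (this hν).2
  refine ⟨μ, hF0 hμ, hinv μ (hF0 hμ), ⟨fun A hA hTA => ?_⟩⟩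
  rw [Filter.eventuallyConst_set']
  by_contra! hcon
  have h2 : (μ : Measure Ω) Aᶜ ≠ 0 := fun h => hcon.2 (by
    rw [ae_eq_univ]; exact h)
  have h1 : (μ : Measure Ω) A ≠ 0 := fun h => hcon.1 (by
    rw [ae_eq_empty]; exact h)
  haveI p2 := ProbabilityTheory.cond_isProbabilityMeasure h2
  haveI p1 := ProbabilityTheory.cond_isProbabilityMeasure h1
  have m1 := Fcc μ hμ A hA hTA h1 h2 ⟨_, p1⟩ rfl
  have m2 := Fcc μ hμ Aᶜ hA.compl (by rw [Set.preimage_compl, hTA]) h2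
        (by rwa [compl_compl]) ⟨_, p2⟩ rfl
  have := ext_int (μ := ProbabilityTheory.cond (μ : Measure Ω) A)
    (ν := ProbabilityTheory.cond (μ : Measure Ω) Aᶜ)
    (fun g hg => le_antisymm (key g hg _ m1 _ m2) (key g hg _ m2 _ m1))
  have h3 := congrArg (fun m => m A) this
  simp only [ProbabilityTheory.cond_apply hA, ProbabilityTheory.cond_apply hA.compl] at h3
  rw [Set.inter_self, Set.compl_inter_self, measure_empty, mul_zero,
    ENNReal.inv_mul_cancel h1 (measure_ne_top _ _)] at h3
  exact one_ne_zero h3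

/-- Empirical measures. -/
lemma exists_emp (T : Ω → Ω) (ω : Ω) (n : ℕ) : ∃ μ : ProbabilityMeasure Ω,
    ∀ g : Ω → ℝ, Continuous g → ∫ x, g x ∂(μ : Measure Ω) =
      (∑ k ∈ Finset.range (n + 1), g (T^[k] ω)) / (n + 1 : ℝ) := by
  let m : Measure Ω :=
    ((n + 1 : ℕ) : ENNReal)⁻¹ • ∑ k ∈ Finset.range (n + 1), Measure.dirac (T^[k] ω)
  have hm : IsProbabilityMeasure m := ⟨by
    simp only [m, Measure.smul_apply, Measure.coe_finset_sum, Finset.sum_apply, measure_univ,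
      Finset.sum_const, Finset.card_range, smul_eq_mul, nsmul_eq_mul, mul_one]
    exact ENNReal.inv_mul_cancel (by simp) (by simp)⟩
  refine ⟨⟨m, hm⟩, fun g hg => ?_⟩
  change ∫ x, g x ∂m = _
  simp only [m]
  rw [integral_smul_measure, integral_finset_sum_measure (fun i _ => integrable_cont _ hg)]
  simp only [integral_dirac, ENNReal.toReal_inv, ENNReal.toReal_natCast, smul_eq_mul]
  push_cast
  rw [div_eq_inv_mul]

/-- Main combinatorial bound. -/
lemma comb (T : Ω → Ω) (f : ℕ → Ω → ℝ)
    (hcont : ∀ n, Continuous (f n))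
    (hsub : ∀ m n : ℕ, ∀ ω : Ω, f (m + n) ω ≤ f n (T^[m] ω) + f m ω) (m : ℕ) :
    ∃ C : ℝ, ∀ n ω, m ≤ n →
      m * f n ω ≤ ∑ k ∈ Finset.range n, f m (T^[k] ω) + C := by
  have hB : ∃ B : ℝ, 0 ≤ B ∧ ∀ i ≤ m, ∀ ω, |f i ω| ≤ B := by
    refine ⟨∑ i ∈ Finset.range (m + 1), ‖BoundedContinuousFunction.mkOfCompact ⟨f i, hcont i⟩‖,
      Finset.sum_nonneg fun _ _ => norm_nonneg _, fun i hi ω => ?_⟩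
    refine le_trans ?_ (Finset.single_le_sum (f := fun i =>
      ‖BoundedContinuousFunction.mkOfCompact (⟨f i, hcont i⟩ : C(Ω, ℝ))‖)
      (fun _ _ => norm_nonneg _) (Finset.mem_range.2 (Nat.lt_succ_of_le hi)))
    exact (BoundedContinuousFunction.mkOfCompact (⟨f i, hcont i⟩ : C(Ω, ℝ))).norm_coe_le_norm ω
  obtain ⟨B, B0, hB⟩ := hB
  rcases Nat.eq_zero_or_pos m with rfl | hm
  · refine ⟨0, fun n ω _ => ?_⟩
    have h0 : ∀ x, 0 ≤ f 0 x := fun x => by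
      have := hsub 0 0 x
      simp at this
      exact this
    simpa using Finset.sum_nonneg fun k _ => h0 (T^[k] ω)
  have step : ∀ n ω, ∑ i ∈ Finset.range m, f n (T^[i] ω)
      ≤ ∑ k ∈ Finset.range n, f m (T^[k] ω) + 2 * m * B := by
    intro n
    induction n using Nat.strong_induction_on with
    | _ n ih =>
      intro ω
      rcases lt_or_ge n m with h | h
      · have a : ∑ i ∈ Finset.range m, f n (T^[i] ω) ≤ m * B := by
          have := Finset.sum_le_card_nsmul (Finset.range m) (fun i => f n (T^[i] ω)) B
            (fun i _ => (abs_le.1 (hB n h.le _)).2)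
          simpa using this
        have b : -(n * B) ≤ ∑ k ∈ Finset.range n, f m (T^[k] ω) := by
          have := Finset.card_nsmul_le_sum (Finset.range n) (fun i => f m (T^[i] ω)) (-B)
            (fun i _ => (abs_le.1 (hB m le_rfl _)).1)
          simpa using this
        have : (n : ℝ) * B ≤ m * B :=
          mul_le_mul_of_nonneg_right (by exact_mod_cast h.le) B0
        linarith
      · obtain ⟨p, rfl⟩ := Nat.exists_eq_add_of_le h
        have i1 := ih p (by omega) (T^[m] ω)
        have i2 : ∑ i ∈ Finset.range m, f (m + p) (T^[i] ω) ≤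
            ∑ i ∈ Finset.range m, (f p (T^[i] (T^[m] ω)) + f m (T^[i] ω)) := by
          refine Finset.sum_le_sum fun i _ => ?_
          have := hsub m p (T^[i] ω)
          rwa [← Function.iterate_add_apply, add_comm m i, Function.iterate_add_apply] at this
        rw [Finset.sum_add_distrib] at i2
        rw [Finset.sum_range_add]
        have i3 : ∀ k, T^[m + k] ω = T^[k] (T^[m] ω) := fun k => by
          rw [add_comm, Function.iterate_add_apply]
        simp only [i3]
        linarith
  refine ⟨2 * m * B + 3 * m * B, fun n ω hn => ?_⟩
  obtain ⟨p, rfl⟩ := Nat.exists_eq_add_of_le hn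
  have h1 : ∀ i ∈ Finset.range m, f (m + p) ω ≤ f p (T^[i] ω) + 2 * B := by
    intro i hi
    have hi := Finset.mem_range.1 hi
    obtain ⟨q, rfl⟩ := Nat.exists_eq_add_of_le hi.le
    have a := hsub i (p + q) ω
    have b := hsub p q (T^[i] ω)
    have c := (abs_le.1 (hB i hi.le ω)).2
    have d := (abs_le.1 (hB q (by omega) (T^[p] (T^[i] ω)))).2
    rw [show i + q + p = i + (p + q) by ring]
    linarith
  have h2 := Finset.sum_le_sum h1
  rw [Finset.sum_add_distrib] at h2
  simp only [Finset.sum_const, Finset.card_range, nsmul_eq_mul] at h2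
  have h3 := step p ω
  have h4 : ∑ k ∈ Finset.range (m + p), f m (T^[k] ω) ≥
      ∑ k ∈ Finset.range p, f m (T^[k] ω) - m * B := by
    rw [add_comm m p, Finset.sum_range_add]
    have := Finset.card_nsmul_le_sum (Finset.range m) (fun i => f m (T^[p + i] ω)) (-B)
            (fun i _ => (abs_le.1 (hB m le_rfl _)).1)
    simp at this
    linarith
  linarith

lemma main (T : Ω → Ω) (hT : Continuous T) [Nonempty Ω]
    (f : ℕ → Ω → ℝ) (hcont : ∀ n, Continuous (f n))
    (hsub : ∀ m n : ℕ, ∀ ω : Ω, f (m + n) ω ≤ f n (T^[m] ω) + f m ω)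
    (α : ℝ)
    (hα : ∀ μ : Measure Ω, IsProbabilityMeasure μ → Ergodic T μ →
      ∃ n : ℕ, (∫ ω, f (n + 1) ω ∂μ) / (n + 1) < α) :
    ∀ᶠ n : ℕ in atTop, (⨆ ω : Ω, f n ω) / n < α := by
  have hbdd : ∀ n, BddAbove (Set.range (f n)) := fun n =>
    (isCompact_range (hcont n)).bddAbove
  set a : ℕ → ℝ := fun n => ⨆ ω, f n ω with ha
  have hle : ∀ n ω, f n ω ≤ a n := fun n ω => le_ciSup (hbdd n) ω
  have asub : Subadditive a := fun m n => ciSup_le fun ω => by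
    linarith [hsub m n ω, hle n (T^[m] ω), hle m ω]
  by_contra hcon
  have hge : ∀ n : ℕ, n ≠ 0 → α ≤ a n / n := by
    intro n hn
    by_contra! h
    exact hcon (asub.eventually_div_lt_of_div_lt hn h)
  have hbb : BddBelow (Set.range fun n : ℕ => a n / n) := by
    refine ⟨min α 0, ?_⟩
    rintro _ ⟨n, rfl⟩
    rcases eq_or_ne n 0 with rfl | hn
    · simp
    · exact (min_le_left _ _).trans (hge n hn)
  set β := asub.lim with hβ
  have hlim := asub.tendsto_lim hbb
  have hαβ : α ≤ β := by
    refine ge_of_tendsto hlim ?_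
    filter_upwards [eventually_ne_atTop 0] with n hn using hge n hn
  have hβa : ∀ n : ℕ, n * β ≤ a n := by
    intro n
    rcases eq_or_ne n 0 with rfl | hn
    · have := asub 0 0
      simp at this ⊢
      linarith
    · have := asub.lim_le_div hbb hn
      have hn' : (0 : ℝ) < n := by positivity
      rw [le_div_iff₀ hn'] at this
      linarith
  -- the closed set of candidates
  let F₀ : Set (ProbabilityMeasure Ω) :=
    {μ | (∀ g : Ω → ℝ, Continuous g →
      ∫ x, g (T x) ∂(μ : Measure Ω) = ∫ x, g x ∂(μ : Measure Ω)) ∧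
      ∀ n : ℕ, n * β ≤ ∫ x, f n x ∂(μ : Measure Ω)}
  have hcl : IsClosed F₀ := by
    have : F₀ = (⋂ g : C(Ω, ℝ), {μ : ProbabilityMeasure Ω |
        ∫ x, g (T x) ∂(μ : Measure Ω) = ∫ x, g x ∂(μ : Measure Ω)}) ∩
        ⋂ n : ℕ, {μ : ProbabilityMeasure Ω | n * β ≤ ∫ x, f n x ∂(μ : Measure Ω)} := by
      ext μ
      simp only [F₀, Set.mem_setOf_eq, Set.mem_inter_iff, Set.mem_iInter]
      exact and_congr_left fun _ => ⟨fun h g => h g g.continuous, fun h g hg => h ⟨g, hg⟩⟩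
    rw [this]
    refine (isClosed_iInter fun g => isClosed_eq (cont_int (g.continuous.comp hT))
      (cont_int g.continuous)).inter (isClosed_iInter fun n => isClosed_le continuous_const
      (cont_int (hcont n)))
  have hinv : ∀ μ ∈ F₀, MeasurePreserving T (μ : Measure Ω) μ := fun μ hμ => inv_of_int hT hμ.1
  have hne : F₀.Nonempty := by
    have hex : ∀ n, ∃ ω, a n = f n ω := fun n => by
      obtain ⟨ω, -, h⟩ := isCompact_univ.exists_isMaxOn Set.univ_nonempty (hcont n).continuousOn
      exact ⟨ω, le_antisymm (ciSup_le fun x => h (Set.mem_univ x)) (hle n ω)⟩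
    choose w hw using hex
    choose e he using fun n => exists_emp T (w (n + 1)) n
    let U : Ultrafilter ℕ := hyperfilter ℕ
    have hU : (U : Filter ℕ) ≤ atTop := Nat.hyperfilter_le_atTop
    obtain ⟨μ, -, hμ⟩ := isCompact_univ.ultrafilter_le_nhds (U.map e) (by simp)
    have ht : Tendsto e U (𝓝 μ) := hμ
    have hti : ∀ g : Ω → ℝ, Continuous g → Tendsto (fun n => ∫ x, g x ∂(e n : Measure Ω)) U
      (𝓝 (∫ x, g x ∂(μ : Measure Ω))) := fun g hg => ((cont_int hg).tendsto μ).comp ht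
    have hz : ∀ C : ℝ, Tendsto (fun n : ℕ => C / (n + 1 : ℝ)) U (𝓝 0) := fun C => by
      refine Tendsto.mono_left ?_ hU
      have := tendsto_one_div_add_atTop_nhds_zero_nat (𝕜 := ℝ)
      simpa [div_eq_mul_inv] using this.const_mul C
    refine ⟨μ, fun g hg => ?_, fun m => ?_⟩
    · obtain ⟨C, hC⟩ : ∃ C : ℝ, ∀ x, |g x| ≤ C :=
        ⟨_, (BoundedContinuousFunction.mkOfCompact (⟨g, hg⟩ : C(Ω, ℝ))).norm_coe_le_norm⟩
      have h1 := (hti _ (hg.comp hT)).sub (hti g hg)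
      have h2 : Tendsto (fun n => ∫ x, (g ∘ T) x ∂(e n : Measure Ω) -
          ∫ x, g x ∂(e n : Measure Ω)) U (𝓝 0) := by
        refine squeeze_zero_norm (fun n => ?_) (hz (2 * C))
        rw [he n _ (hg.comp hT), he n _ hg, ← sub_div, ← Finset.sum_sub_distrib]
        have : ∀ k, (g ∘ T) (T^[k] (w (n + 1))) = g (T^[k + 1] (w (n + 1))) := fun k => by
          rw [Function.iterate_succ_apply']; rfl
        simp only [this]
        rw [Finset.sum_range_sub (fun k => g (T^[k] (w (n + 1)))), norm_div]
        have hp : (0 : ℝ) < n + 1 := by positivity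
        rw [Real.norm_of_nonneg hp.le]
        refine div_le_div_of_nonneg_right ?_ hp.le
        refine (norm_sub_le _ _).trans ?_
        have := hC (T^[n + 1] (w (n + 1)))
        have := hC (T^[0] (w (n + 1)))
        simp only [Real.norm_eq_abs]
        linarith
      exact sub_eq_zero.1 (tendsto_nhds_unique h1 h2)
    · obtain ⟨C, hC⟩ := comb T f hcont hsub m
      have h1 := (hti _ (hcont m)).add (hz C)
      rw [add_zero] at h1
      refine ge_of_tendsto h1 (hU ?_)
      filter_upwards [eventually_ge_atTop m] with n hn
      rw [he n _ (hcont m), ← add_div]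
      have hp : (0 : ℝ) < n + 1 := by positivity
      rw [le_div_iff₀ hp]
      have c := hC (n + 1) (w (n + 1)) (by omega)
      rw [← hw] at c
      have d := hβa (n + 1)
      push_cast at d
      have := mul_le_mul_of_nonneg_left d (Nat.cast_nonneg (α := ℝ) m)
      linarith
  have hcc : CondClosed T F₀ := by
    intro μ hμ A hA hTA h1 h2 ν hν
    have νinv : MeasurePreserving T (ν : Measure Ω) ν := by
      rw [hν]; exact cond_inv (hinv μ hμ) hA hTA
    refine ⟨fun g hg => int_of_inv hT νinv hg, fun m => ?_⟩
    obtain ⟨t, t0, t1, ht⟩ := cond_split hA h1 h2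
    haveI p2 := ProbabilityTheory.cond_isProbabilityMeasure h2
    rw [← hν] at ht
    set b : ℕ → ℝ := fun n => ∫ x, f n x ∂(ν : Measure Ω) with hb
    have bsub : Subadditive b := by
      intro m n
      have hi : ∫ x, f n (T^[m] x) ∂(ν : Measure Ω) = b n :=
        int_of_inv (hT.iterate m) (νinv.iterate m) (hcont n)
      have i1 := integrable_cont (ν : Measure Ω) ((hcont n).comp (hT.iterate m))
      have i2 := integrable_cont (ν : Measure Ω) (hcont m)
      have h := integral_mono (integrable_cont (ν : Measure Ω) (hcont (m + n))) (i1.add i2)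
        (hsub m n)
      rw [integral_add' i1 i2] at h
      have h' : b (m + n) ≤ ∫ x, f n (T^[m] x) ∂(ν : Measure Ω) + b m := h
      linarith
    change m * β ≤ b m
    rcases eq_or_ne m 0 with rfl | hm
    · have := bsub 0 0
      simp at this ⊢
      linarith
    by_contra! hlt
    have hm' : (0 : ℝ) < m := by positivity
    have hlt' : b m / m < β := by rw [div_lt_iff₀ hm']; linarith
    obtain ⟨L, hL1, hL2⟩ := exists_between hlt'
    have e1 := bsub.eventually_div_lt_of_div_lt hm hL1
    have e2 : ∀ᶠ n : ℕ in atTop, (1 - t) * (a n / n) < (1 - t) * β + t * (β - L) :=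
      (hlim.const_mul (1 - t)).eventually_lt_const (by nlinarith [mul_pos t0 (sub_pos.2 hL2)])
    obtain ⟨n, hn1, hn2, hn0⟩ := (e1.and (e2.and (eventually_gt_atTop 0))).exists
    have hn' : (0 : ℝ) < n := by positivity
    have k1 := hμ.2 n
    rw [ht _ (hcont n)] at k1
    have k2 : ∫ x, f n x ∂(ProbabilityTheory.cond (μ : Measure Ω) Aᶜ) ≤ a n := by
      have := integral_mono (integrable_cont (ProbabilityTheory.cond (μ : Measure Ω) Aᶜ) (hcont n))
        (integrable_const (a n)) (hle n)
      simpa using this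
    rw [div_lt_iff₀ hn'] at hn1
    have hn2' := mul_lt_mul_of_pos_right hn2 hn'
    rw [mul_assoc, div_mul_cancel₀ _ hn'.ne'] at hn2'
    have k3 := mul_le_mul_of_nonneg_left k2 (sub_nonneg.2 t1.le)
    have k4 := mul_lt_mul_of_pos_left hn1 t0
    have k1' : n * β ≤ t * b n + (1 - t) *
      ∫ x, f n x ∂(ProbabilityTheory.cond (μ : Measure Ω) Aᶜ) := k1
    nlinarith
  obtain ⟨μ, hμ, herg⟩ := exists_ergodic F₀ hcl hne hinv hcc
  obtain ⟨n, hn⟩ := hα μ inferInstance herg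
  have hp : (0 : ℝ) < n + 1 := by positivity
  rw [div_lt_iff₀ hp] at hn
  have h := hμ.2 (n + 1)
  push_cast at h
  nlinarith

end aux

end SUSE

/-- **Semi-uniform subadditive ergodic theorem (Schreiber; Sturman–Stark).**
If the growth rate `inf_{n ≥ 1} (1/n) ∫ f_n dμ` is `< α` for every `T`-ergodic Borel
probability measure `μ`, then for all sufficiently large `ℓ`, `sup_ω (1/ℓ) f_ℓ(ω) < α`. -/
theorem semi_uniform_subadditive_ergodic
    {Ω : Type*} [TopologicalSpace Ω] [CompactSpace Ω] [TopologicalSpace.MetrizableSpace Ω]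
    [Nonempty Ω] [MeasurableSpace Ω] [BorelSpace Ω]
    (T : Ω → Ω) (hT : Continuous T)
    (f : ℕ → Ω → ℝ) (hcont : ∀ n, 1 ≤ n → Continuous (f n))
    (hsub : ∀ m n : ℕ, 1 ≤ m → 1 ≤ n → ∀ ω : Ω, f (m + n) ω ≤ f n (T^[m] ω) + f m ω)
    (α : ℝ)
    (hα : ∀ μ : Measure Ω, IsProbabilityMeasure μ → Ergodic T μ →
      (⨅ n : ℕ, (∫ ω, f (n + 1) ω ∂μ) / (n + 1)) < α) :
    ∃ N : ℕ, 1 ≤ N ∧ ∀ ℓ : ℕ, N ≤ ℓ → (⨆ ω : Ω, f ℓ ω) / ℓ < α := by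
  have key := SUSE.main T hT (fun n => if n = 0 then fun _ => 0 else f n)
    (fun n => by
      by_cases h : n = 0
      · simp only [h, if_true]; exact continuous_const
      · simp only [h, if_false]; exact hcont n (by omega))
    (fun m n ω => by
      by_cases hm : m = 0
      · subst hm; simp
      by_cases hn : n = 0
      · subst hn; simp
      have : m + n ≠ 0 := by omega
      simp only [hm, hn, this, if_false]
      exact hsub m n (by omega) (by omega) ω) α
    (fun μ hμ he => by
      have h := hα μ hμ he
      simp only [Nat.add_eq_zero_iff, one_ne_zero, and_false, if_false]
      by_cases hb : BddBelow (Set.range fun n : ℕ => (∫ ω, f (n + 1) ω ∂μ) / ((n : ℝ) + 1))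
      · exact exists_lt_of_ciInf_lt h
      · rw [not_bddBelow_iff] at hb
        obtain ⟨_, ⟨n, rfl⟩, hn⟩ := hb α
        exact ⟨n, hn⟩)
  obtain ⟨N, hN⟩ := eventually_atTop.1 key
  refine ⟨N + 1, by omega, fun l hl => ?_⟩
  have h := hN l (by omega)
  have h0 : l ≠ 0 := by omega
  simpa only [h0, if_false] using h
end
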